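/- arXiv:1707.06487 — 5 statements merged into one kernel-verified Lean document; each statement's English description precedes it below -/
import Mathlib

section
/- Let m, n, N be positive integers, let V ∈ ℝ^{n×n} be a nonzero symmetric positive semidefinite matrix, let R' > 0, B' > 0, ρ > 0, c' ≥ 0 and δ ∈ (0,1). Let 𝒴 be a measurable space and let D be a probability measure on ℝ^{m×n} × 𝒴 such that ‖X‖_H(V) ≤ R' for D-almost every (X, y). Let Φ : ℝ × 𝒴 → ℝ be measurable, such that for every y ∈ 𝒴 the map a ↦ Φ(a, y) is ρ-Lipschitz, and |Φ(a, y)| ≤ c' for all a ∈ [−B'R', B'R'] and all y ∈ 𝒴. For W' ∈ ℝ^{m×n} define L_D(W') = E_{(X,y)∼D}[Φ(B_V(W', X), y)], and for a sample S = ((X_1, y_1), …, (X_N, y_N)) define L_S(W') = (1/N) Σ_{i=1}^N Φ(B_V(W', X_i), y_i). Then there exists a measurable set E of samples, of D^N-measure at least 1 − δ, such that for every S ∈ E and every W' ∈ ℝ^{m×n} with ‖W'‖_H(V) ≤ B' one has L_D(W') ≤ L_S(W') + 2ρB'R'/√N + c'·√(2·ln(2/δ)/N). -/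
/-!
The bound is the classical Rademacher-complexity argument for a Lipschitz loss over a ball of
linear functionals.

*Reduction to a Hilbert space.* Writing `V = ∑ k, v k (v k)ᵀ` gives a feature map `ψ` into a
Euclidean space with `BV V W X = ⟪ψ W, ψ X⟫` (`exists_feature_map`), so `Hnorm V X = ‖ψ X‖`, and
the claim becomes one about weights in a ball of radius `B'` and features that are almost surely
in a ball of radius `R'`.

*Concentration.* For a finite class of weights, the maximal deviation
`max_t ∑ i, (E f_t - f_t (S i))` changes by at most `2c'` when one sample point changes.
McDiarmid's inequality (`measure_ge_le_of_boundedDiff`), proved by integrating out one coordinate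
at a time with Hoeffding's lemma, bounds its excess over its mean.

*Expectation.* The mean is at most `2ρB'R'√N` (`integral_fmax_dev_le`). Instead of introducing
Rademacher signs globally, one proves by induction on `N` that
`E max_t (⟪W_t, w⟫ + ∑ i, (E f_t - f_t (S i))) ≤ B' √(‖w‖² + N (2ρR')²)` for every shift `w`.
Symmetrizing and contracting a single coordinate (`integral_fmax_symm_le`) replaces it by the
average over the two signs of the linear term `±2ρ⟪W_t, x⟫`, which is absorbed into `w`; the
parallelogram law and the concavity of the square root close the induction.

*From finite classes to the ball.* A dense sequence in the ball exhausts it by finite classes with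
increasing bad events, and both risks are continuous in the weight (`exists_uniform_dev_set`).
-/

open Matrix MeasureTheory

noncomputable section

/-- Measurable space structure on real matrices (entrywise, as functions). -/
instance {m n : ℕ} : MeasurableSpace (Matrix (Fin m) (Fin n) ℝ) :=
  MeasurableSpace.pi

/-- Frobenius inner product of two real matrices. -/
def frobInner {m n : ℕ} (A B : Matrix (Fin m) (Fin n) ℝ) : ℝ :=
  ∑ i, ∑ j, A i j * B i j

/-- Frobenius norm of a real matrix. -/
def frobNorm {m n : ℕ} (A : Matrix (Fin m) (Fin n) ℝ) : ℝ :=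
  Real.sqrt (frobInner A A)

/-- The bilinear form `B_V(W,X) = ⟨WᵀX, V⟩_F / ‖V‖_F`. -/
def BV {m n : ℕ} (V : Matrix (Fin n) (Fin n) ℝ) (W X : Matrix (Fin m) (Fin n) ℝ) : ℝ :=
  frobInner (Wᵀ * X) V / frobNorm V

/-- The seminorm `‖X‖_H(V) = (B_V(X,X))^{1/2}`. -/
def Hnorm {m n : ℕ} (V : Matrix (Fin n) (Fin n) ℝ) (X : Matrix (Fin m) (Fin n) ℝ) : ℝ :=
  Real.sqrt (BV V X X)

open ProbabilityTheory

/-! ### McDiarmid's inequality -/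

section Concentration

variable {Ω : Type*} [MeasurableSpace Ω]

lemma integrable_of_abs_le {μ : Measure Ω} [IsFiniteMeasure μ] {f : Ω → ℝ}
    (hf : Measurable f) {M : ℝ} (hM : ∀ ω, |f ω| ≤ M) : Integrable f μ :=
  Integrable.of_bound hf.aestronglyMeasurable M (Filter.Eventually.of_forall hM)

lemma abs_integral_le_of_abs_le {μ : Measure Ω} [IsProbabilityMeasure μ] {f : Ω → ℝ}
    {M : ℝ} (hM : ∀ ω, |f ω| ≤ M) : |∫ ω, f ω ∂μ| ≤ M := by
  simpa using norm_integral_le_of_norm_le_const (μ := μ) (f := f) (C := M)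
    (Filter.Eventually.of_forall hM)

lemma measurable_fin_cons {N : ℕ} :
    Measurable fun p : Ω × (Fin N → Ω) => (Fin.cons p.1 p.2 : Fin (N + 1) → Ω) := by
  refine measurable_pi_iff.2 fun i => ?_
  refine Fin.cases ?_ (fun j => ?_) i
  · simpa using measurable_fst
  · simpa using! (measurable_pi_apply j).comp measurable_snd

lemma integral_pi_succ (μ : Measure Ω) [IsProbabilityMeasure μ] {N : ℕ}
    {f : (Fin (N + 1) → Ω) → ℝ} (hf : Measurable f) {M : ℝ} (hM : ∀ S, |f S| ≤ M) :
    ∫ S, f S ∂(Measure.pi fun _ : Fin (N + 1) => μ) =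
      ∫ S, ∫ x, f (Fin.cons x S) ∂μ ∂(Measure.pi fun _ : Fin N => μ) := by
  have h := (measurePreserving_piFinSuccAbove (fun _ : Fin (N + 1) => μ) 0).symm
  rw [← h.integral_comp' f]
  have e : ∀ p : Ω × (Fin N → Ω),
      (MeasurableEquiv.piFinSuccAbove (fun _ : Fin (N + 1) => Ω) 0).symm p
        = Fin.cons p.1 p.2 := by
    intro p
    simp [MeasurableEquiv.piFinSuccAbove_symm_apply, Fin.insertNthEquiv]
  simp_rw [e]
  exact integral_prod_symm _
    (integrable_of_abs_le (hf.comp measurable_fin_cons) (fun p => hM _))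

/-- The bounded-differences property: changing a single coordinate changes `f` by at most `c`. -/
def BoundedDiff {N : ℕ} (f : (Fin N → Ω) → ℝ) (c : ℝ) : Prop :=
  ∀ (i : Fin N) (S T : Fin N → Ω), (∀ j, j ≠ i → S j = T j) → f S - f T ≤ c

/-- Hoeffding's lemma in the form used for one coordinate: only the oscillation of `g` matters. -/
lemma integral_exp_le_of_osc {μ : Measure Ω} [IsProbabilityMeasure μ] {g : Ω → ℝ}
    (hg : Measurable g) {M : ℝ} (hM : ∀ ω, |g ω| ≤ M) {c : ℝ} (hc : ∀ ω ω', g ω - g ω' ≤ c)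
    (l : ℝ) :
    ∫ ω, Real.exp (l * g ω) ∂μ ≤ Real.exp (l * ∫ ω, g ω ∂μ + l ^ 2 * c ^ 2 / 8) := by
  obtain ⟨ω₀⟩ : Nonempty Ω := nonempty_of_isProbabilityMeasure μ
  have hbdd : BddBelow (Set.range g) := ⟨-M, by
    rintro _ ⟨ω, rfl⟩; exact (abs_le.1 (hM ω)).1⟩
  have : Nonempty Ω := ⟨ω₀⟩
  set a := ⨅ ω, g ω with ha
  have hmem : ∀ ω, g ω ∈ Set.Icc a (a + c) := fun ω =>
    ⟨ciInf_le hbdd ω, by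
      have : g ω - c ≤ a := le_ciInf fun ω' => by linarith [hc ω ω']
      linarith⟩
  have h := (hasSubgaussianMGF_of_mem_Icc (μ := μ) hg.aemeasurable
    (Filter.Eventually.of_forall hmem)).mgf_le l
  rw [mgf] at h
  have e : ∀ ω, Real.exp (l * g ω) =
      Real.exp (l * ∫ ω, g ω ∂μ) * Real.exp (l * (g ω - ∫ ω, g ω ∂μ)) := by
    intro ω; rw [← Real.exp_add]; ring_nf
  simp_rw [e]
  rw [integral_const_mul, Real.exp_add]
  refine mul_le_mul_of_nonneg_left (h.trans (le_of_eq ?_)) (Real.exp_pos _).le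
  congr 1
  simp
  rw [div_pow, sq_abs]
  ring

/-- McDiarmid's bound on the moment generating function, by induction on the number of
coordinates: averaging out one coordinate preserves bounded differences, and costs one
application of Hoeffding's lemma. -/
lemma integral_exp_le_of_boundedDiff (μ : Measure Ω) [IsProbabilityMeasure μ] {N : ℕ}
    {f : (Fin N → Ω) → ℝ} (hf : Measurable f) {M : ℝ} (hM : ∀ S, |f S| ≤ M) {c : ℝ}
    (hc : BoundedDiff f c) (l : ℝ) :
    ∫ S, Real.exp (l * f S) ∂(Measure.pi fun _ : Fin N => μ) ≤
      Real.exp (l * (∫ S, f S ∂(Measure.pi fun _ : Fin N => μ)) + N * (l ^ 2 * c ^ 2 / 8)) := by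
  induction N with
  | zero => simp [integral_unique]
  | succ N ih =>
    have hexp : Measurable fun S => Real.exp (l * f S) := (hf.const_mul l).exp
    have hexpM : ∀ S, |Real.exp (l * f S)| ≤ Real.exp (|l| * M) := by
      intro S
      rw [abs_of_pos (Real.exp_pos _)]
      refine Real.exp_le_exp.2 ((le_abs_self _).trans ?_)
      rw [abs_mul]
      exact mul_le_mul_of_nonneg_left (hM S) (abs_nonneg l)
    have hcons : ∀ S : Fin N → Ω, Measurable fun x => f (Fin.cons x S) := fun S =>
      hf.comp (measurable_fin_cons.comp measurable_prodMk_right)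
    have hF : Measurable fun S : Fin N → Ω => ∫ x, f (Fin.cons x S) ∂μ := by
      have : StronglyMeasurable fun p : (Fin N → Ω) × Ω => f (Fin.cons p.2 p.1) :=
        (hf.comp (measurable_fin_cons.comp measurable_swap)).stronglyMeasurable
      exact this.integral_prod_right'.measurable
    have hG : Measurable fun S : Fin N → Ω => ∫ x, Real.exp (l * f (Fin.cons x S)) ∂μ := by
      have : StronglyMeasurable fun p : (Fin N → Ω) × Ω => Real.exp (l * f (Fin.cons p.2 p.1)) :=
        (hexp.comp (measurable_fin_cons.comp measurable_swap)).stronglyMeasurable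
      exact this.integral_prod_right'.measurable
    have hFM : ∀ S : Fin N → Ω, |∫ x, f (Fin.cons x S) ∂μ| ≤ M := fun S =>
      abs_integral_le_of_abs_le fun x => hM _
    have hFexpM : ∀ S : Fin N → Ω,
        |Real.exp (l * (∫ x, f (Fin.cons x S) ∂μ) + l ^ 2 * c ^ 2 / 8)| ≤
          Real.exp (|l| * M + l ^ 2 * c ^ 2 / 8) := by
      intro S
      rw [abs_of_pos (Real.exp_pos _)]
      refine Real.exp_le_exp.2 (add_le_add ((le_abs_self _).trans ?_) le_rfl)
      rw [abs_mul]
      exact mul_le_mul_of_nonneg_left (hFM S) (abs_nonneg l)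
    have hFc : BoundedDiff (fun S : Fin N → Ω => ∫ x, f (Fin.cons x S) ∂μ) c := by
      intro i S T hST
      rw [← integral_sub (integrable_of_abs_le (hcons S) fun x => hM _)
        (integrable_of_abs_le (hcons T) fun x => hM _)]
      have hle : ∀ x, f (Fin.cons x S) - f (Fin.cons x T) ≤ c := by
        intro x
        refine hc i.succ _ _ fun j => ?_
        refine Fin.cases (fun _ => by simp) (fun k hk => ?_) j
        simpa using hST k fun h => hk (by rw [h])
      calc _ ≤ ∫ _, c ∂μ := integral_mono
            ((integrable_of_abs_le (hcons S) fun x => hM _).sub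
              (integrable_of_abs_le (hcons T) fun x => hM _)) (integrable_const _) hle
        _ = c := by simp
    have hstep : ∀ S : Fin N → Ω, ∫ x, Real.exp (l * f (Fin.cons x S)) ∂μ ≤
        Real.exp (l * (∫ x, f (Fin.cons x S) ∂μ) + l ^ 2 * c ^ 2 / 8) := fun S =>
      integral_exp_le_of_osc (hcons S) (fun x => hM _) (fun x x' => hc 0 _ _ fun j => by
        refine Fin.cases (fun h => absurd rfl h) (fun k _ => by simp) j) l
    rw [integral_pi_succ μ hexp hexpM, integral_pi_succ μ hf hM]
    calc _ ≤ ∫ S, Real.exp (l * (∫ x, f (Fin.cons x S) ∂μ) + l ^ 2 * c ^ 2 / 8)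
            ∂(Measure.pi fun _ : Fin N => μ) := by
          refine integral_mono (integrable_of_abs_le hG fun S =>
            abs_integral_le_of_abs_le fun x => hexpM _)
            (integrable_of_abs_le ((hF.const_mul l).add_const _).exp hFexpM) hstep
      _ = (∫ S, Real.exp (l * (∫ x, f (Fin.cons x S) ∂μ))
            ∂(Measure.pi fun _ : Fin N => μ)) * Real.exp (l ^ 2 * c ^ 2 / 8) := by
          simp_rw [Real.exp_add]
          rw [integral_mul_const]
      _ ≤ _ := mul_le_mul_of_nonneg_right (ih hF hFM hFc) (Real.exp_pos _).le
      _ = _ := by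
          rw [← Real.exp_add]
          push_cast
          ring_nf

/-- McDiarmid's inequality. -/
lemma measure_ge_le_of_boundedDiff (μ : Measure Ω) [IsProbabilityMeasure μ] {N : ℕ}
    {f : (Fin N → Ω) → ℝ} (hf : Measurable f) {M : ℝ} (hM : ∀ S, |f S| ≤ M) {c : ℝ}
    (hc : BoundedDiff f c) {ε : ℝ} (hε : 0 ≤ ε) :
    (Measure.pi fun _ : Fin N => μ).real
        {S | (∫ T, f T ∂(Measure.pi fun _ : Fin N => μ)) + ε ≤ f S} ≤
      Real.exp (-ε ^ 2 / (2 * (N * c ^ 2 / 4))) := by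
  set P := Measure.pi fun _ : Fin N => μ
  set e := ∫ T, f T ∂P
  have hsub : HasSubgaussianMGF (fun S => f S - e) ⟨N * c ^ 2 / 4, by positivity⟩ P := by
    constructor
    · intro t
      refine integrable_of_abs_le (M := Real.exp (|t| * (M + |e|)))
        ((hf.sub_const e).const_mul t).exp fun S => ?_
      rw [abs_of_pos (Real.exp_pos _)]
      refine Real.exp_le_exp.2 ((le_abs_self _).trans ?_)
      rw [abs_mul]
      exact mul_le_mul_of_nonneg_left
        ((abs_sub _ _).trans (add_le_add (hM S) le_rfl)) (abs_nonneg t)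
    · intro t
      have h := integral_exp_le_of_boundedDiff μ hf hM hc t
      have h1 : ∀ S, Real.exp (t * (f S - e)) = Real.exp (t * f S) * Real.exp (-(t * e)) := by
        intro S; rw [← Real.exp_add]; ring_nf
      rw [mgf]
      simp_rw [h1]
      rw [integral_mul_const]
      refine (mul_le_mul_of_nonneg_right h (Real.exp_pos _).le).trans (le_of_eq ?_)
      rw [← Real.exp_add]
      congr 1
      change _ = N * c ^ 2 / 4 * t ^ 2 / 2
      ring
  have h := hsub.measure_ge_le hε
  simp only [le_sub_iff_add_le'] at h
  exact h

end Concentration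

/-! ### Finite maxima and two-point contraction -/

section FiniteSup

variable {ι : Type*} [Fintype ι] [Nonempty ι]

/-- Maximum of a finite nonempty family of reals. -/
def fmax (u : ι → ℝ) : ℝ := Finset.univ.sup' Finset.univ_nonempty u

lemma le_fmax (u : ι → ℝ) (t : ι) : u t ≤ fmax u :=
  Finset.le_sup' u (Finset.mem_univ t)

lemma fmax_le {u : ι → ℝ} {M : ℝ} (h : ∀ t, u t ≤ M) : fmax u ≤ M :=
  Finset.sup'_le _ _ fun t _ => h t

lemma exists_eq_fmax (u : ι → ℝ) : ∃ t, fmax u = u t := by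
  obtain ⟨t, -, h⟩ := Finset.exists_mem_eq_sup' (Finset.univ_nonempty (α := ι)) u
  exact ⟨t, h⟩

lemma abs_fmax_le {u : ι → ℝ} {M : ℝ} (h : ∀ t, |u t| ≤ M) : |fmax u| ≤ M := by
  obtain ⟨t, ht⟩ := exists_eq_fmax u
  rw [ht]; exact h t

lemma measurable_fmax {α : Type*} [MeasurableSpace α] {u : α → ι → ℝ}
    (h : ∀ t, Measurable fun a => u a t) : Measurable fun a => fmax (u a) := by
  have := Finset.measurable_sup' (Finset.univ_nonempty (α := ι)) (f := fun t a => u a t)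
    fun t _ => h t
  convert! this using 1
  ext a
  simp [fmax]

lemma fmax_sub_fmax_le {u v : ι → ℝ} {c : ℝ} (h : ∀ t, u t - v t ≤ c) :
    fmax u - fmax v ≤ c := by
  obtain ⟨t, ht⟩ := exists_eq_fmax u
  linarith [h t, le_fmax v t]

/-- Two-point contraction: replacing `φ` by a function `a` with larger increments can only
increase the sum of the two signed maxima. -/
lemma fmax_contraction (u φ a : ι → ℝ) (h : ∀ s t, |φ s - φ t| ≤ |a s - a t|) :
    fmax (fun t => u t + φ t) + fmax (fun t => u t - φ t) ≤
      fmax (fun t => u t + a t) + fmax (fun t => u t - a t) := by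
  obtain ⟨s, hs⟩ := exists_eq_fmax fun t => u t + φ t
  obtain ⟨t, ht⟩ := exists_eq_fmax fun t => u t - φ t
  rw [hs, ht]
  have h1 := (le_abs_self _).trans (h s t)
  have h2 := le_fmax (fun t => u t + a t) s
  have h3 := le_fmax (fun t => u t - a t) t
  have h4 := le_fmax (fun t => u t + a t) t
  have h5 := le_fmax (fun t => u t - a t) s
  rcases abs_cases (a s - a t) with h6 | h6 <;> linarith

end FiniteSup

/-! ### Expected maximal deviation -/

section Rademacher

variable {Ω : Type*} [MeasurableSpace Ω] {ι : Type*} [Fintype ι] [Nonempty ι]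

/-- One-coordinate symmetrization and contraction. Since
`u + E f - f x = ½ E (u + 2 f) + ½ (u - 2 f x)`, the expected maximum on the left is at most
the average of the expected maxima of `u ± 2 f`, to which the two-point contraction applies. -/
lemma integral_fmax_symm_le (μ : Measure Ω) [IsProbabilityMeasure μ]
    {f a : ι → Ω → ℝ} (hf : ∀ t, Measurable (f t)) (ha : ∀ t, Measurable (a t))
    {c A : ℝ} (hfc : ∀ t ω, |f t ω| ≤ c) (haA : ∀ t ω, |a t ω| ≤ A)
    (h : ∀ s t ω, |f s ω - f t ω| ≤ |a s ω - a t ω|) (u : ι → ℝ) :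
    ∫ x, fmax (fun t => u t + ((∫ ω, f t ω ∂μ) - f t x)) ∂μ ≤
      ∫ x, (fmax (fun t => u t + 2 * a t x) + fmax (fun t => u t - 2 * a t x)) / 2 ∂μ := by
  obtain ⟨U, hU⟩ : ∃ U, ∀ t, |u t| ≤ U := ⟨fmax fun t => |u t|, le_fmax _⟩
  have key : ∀ (g : ι → Ω → ℝ) (k : ℝ), (∀ t, Measurable (g t)) → (∀ t ω, |g t ω| ≤ k) →
      Integrable (fun x => fmax fun t => u t + 2 * g t x) μ ∧
      Integrable (fun x => fmax fun t => u t - 2 * g t x) μ := by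
    intro g k hg hk
    constructor
    · refine integrable_of_abs_le (M := U + 2 * k)
        (measurable_fmax fun t => ((hg t).const_mul 2).const_add _) fun x =>
        abs_fmax_le fun t => (abs_add_le _ _).trans ?_
      rw [abs_mul, abs_two]
      linarith [hU t, hk t x]
    · refine integrable_of_abs_le (M := U + 2 * k)
        (measurable_fmax fun t => ((hg t).const_mul 2).const_sub _) fun x =>
        abs_fmax_le fun t => (abs_sub _ _).trans ?_
      rw [abs_mul, abs_two]
      linarith [hU t, hk t x]
  obtain ⟨hf1, hf2⟩ := key f c hf hfc
  obtain ⟨ha1, ha2⟩ := key a A ha haA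
  have hfi : ∀ t, Integrable (f t) μ := fun t => integrable_of_abs_le (hf t) (hfc t)
  have hEc : ∀ t, |∫ ω, f t ω ∂μ| ≤ c := fun t => abs_integral_le_of_abs_le (hfc t)
  set I := ∫ x, fmax (fun t => u t + 2 * f t x) ∂μ with hI
  calc ∫ x, fmax (fun t => u t + ((∫ ω, f t ω ∂μ) - f t x)) ∂μ
      ≤ ∫ x, (I + fmax (fun t => u t - 2 * f t x)) / 2 ∂μ := by
        refine integral_mono ?_ (((integrable_const _).add hf2).div_const _) fun x => ?_
        · refine integrable_of_abs_le (M := U + (c + c))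
            (measurable_fmax fun t => ((hf t).const_sub _).const_add _) fun x =>
            abs_fmax_le fun t => (abs_add_le _ _).trans ?_
          have := abs_sub (∫ ω, f t ω ∂μ) (f t x)
          linarith [hU t, hfc t x, hEc t]
        · refine fmax_le fun t => ?_
          have h1 : u t + 2 * ∫ ω, f t ω ∂μ ≤ I := by
            have : ∫ ω, (u t + 2 * f t ω) ∂μ = u t + 2 * ∫ ω, f t ω ∂μ := by
              rw [integral_add (integrable_const _) ((hfi t).const_mul 2), integral_const_mul]
              simp
            rw [← this]
            exact integral_mono ((integrable_const _).add ((hfi t).const_mul 2)) hf1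
              fun ω => le_fmax (fun t => u t + 2 * f t ω) t
          have h2 := le_fmax (fun t => u t - 2 * f t x) t
          linarith
    _ = ∫ x, (fmax (fun t => u t + 2 * f t x) + fmax (fun t => u t - 2 * f t x)) / 2 ∂μ := by
        rw [integral_div, integral_div, integral_add (integrable_const _) hf2,
          integral_add hf1 hf2]
        simp [hI]
    _ ≤ _ := by
        refine integral_mono ((hf1.add hf2).div_const _) ((ha1.add ha2).div_const _) fun x => ?_
        refine div_le_div_of_nonneg_right (fmax_contraction u _ _ fun s t => ?_) two_pos.le
        rw [← mul_sub, ← mul_sub, abs_mul, abs_mul]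
        exact mul_le_mul_of_nonneg_left (h s t x) (abs_nonneg _)

variable {H : Type*} [NormedAddCommGroup H] [InnerProductSpace ℝ H]

/-- Averaging `√(‖·‖² + r)` over `w ± v`: concavity of the square root and the parallelogram
law. -/
lemma sqrt_avg_le (w v : H) {r K : ℝ} (hr : 0 ≤ r) (hv : ‖v‖ ^ 2 ≤ K) :
    (√(‖w + v‖ ^ 2 + r) + √(‖w - v‖ ^ 2 + r)) / 2 ≤ √(‖w‖ ^ 2 + (r + K)) := by
  refine Real.le_sqrt_of_sq_le ?_
  have h1 := Real.sq_sqrt (show 0 ≤ ‖w + v‖ ^ 2 + r by positivity)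
  have h2 := Real.sq_sqrt (show 0 ≤ ‖w - v‖ ^ 2 + r by positivity)
  have h3 := parallelogram_law_with_norm ℝ w v
  nlinarith [sq_nonneg (√(‖w + v‖ ^ 2 + r) - √(‖w - v‖ ^ 2 + r))]

variable [MeasurableSpace H] [BorelSpace H]

/-- Expected uniform deviation over a finite class. The shift by `⟨W t, w⟩` makes an induction
on `N` possible: symmetrizing and contracting one coordinate replaces its deviation term by the
linear term `±2ρ⟨W t, x⟩`, which is absorbed into `w`. -/
lemma integral_fmax_dev_le (μ : Measure Ω) [IsProbabilityMeasure μ] [SecondCountableTopology H]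
    {W : ι → H} {B R ρ c : ℝ} (hB : 0 ≤ B) (hρ : 0 ≤ ρ) (hW : ∀ t, ‖W t‖ ≤ B)
    {x : Ω → H} (hx : Measurable x) (hxR : ∀ ω, ‖x ω‖ ≤ R)
    {f : ι → Ω → ℝ} (hf : ∀ t, Measurable (f t)) (hfc : ∀ t ω, |f t ω| ≤ c)
    (hlip : ∀ s t ω, |f s ω - f t ω| ≤ ρ * |inner ℝ (W s) (x ω) - inner ℝ (W t) (x ω)|)
    (N : ℕ) (w : H) :
    ∫ S, fmax (fun t => inner ℝ (W t) w + ∑ i, ((∫ ω, f t ω ∂μ) - f t (S i)))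
        ∂(Measure.pi fun _ : Fin N => μ) ≤ B * √(‖w‖ ^ 2 + N * (2 * ρ * R) ^ 2) := by
  have hin : ∀ t (v : H), |inner ℝ (W t) v| ≤ B * ‖v‖ := fun t v =>
    (abs_real_inner_le_norm _ _).trans (mul_le_mul_of_nonneg_right (hW t) (norm_nonneg _))
  have hEc : ∀ t, |∫ ω, f t ω ∂μ| ≤ c := fun t => abs_integral_le_of_abs_le (hfc t)
  have hsumb : ∀ (n : ℕ) t (S : Fin n → Ω),
      |∑ i, ((∫ ω, f t ω ∂μ) - f t (S i))| ≤ n * (c + c) := by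
    intro n t S
    refine (Finset.abs_sum_le_sum_abs _ _).trans ?_
    refine (Finset.sum_le_card_nsmul _ _ (c + c) fun i _ =>
      (abs_sub _ _).trans (add_le_add (hEc t) (hfc t _))).trans (le_of_eq ?_)
    simp [mul_add]
  have hGm : ∀ n : ℕ, Measurable fun p : H × (Fin n → Ω) =>
      fmax fun t => inner ℝ (W t) p.1 + ∑ i, ((∫ ω, f t ω ∂μ) - f t (p.2 i)) := by
    intro n
    refine measurable_fmax fun t => Measurable.add ?_ ?_
    · exact (measurable_const.inner measurable_fst)
    · exact Finset.measurable_sum _ fun i _ => ((hf t).comp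
        ((measurable_pi_apply i).comp measurable_snd)).const_sub _
  have hGb : ∀ (n : ℕ) (v : H) (S : Fin n → Ω), |fmax fun t => inner ℝ (W t) v +
      ∑ i, ((∫ ω, f t ω ∂μ) - f t (S i))| ≤ B * ‖v‖ + n * (c + c) := fun n v S =>
    abs_fmax_le fun t => (abs_add_le _ _).trans (add_le_add (hin t v) (hsumb n t S))
  induction N generalizing w with
  | zero =>
    simp only [integral_unique, Finset.univ_eq_empty, Finset.sum_empty, add_zero]
    simp only [probReal_univ, one_smul, Nat.cast_zero, zero_mul, add_zero,
      Real.sqrt_sq (norm_nonneg _)]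
    exact fmax_le fun t => (le_abs_self _).trans (hin t w)
  | succ N ih =>
    set P := Measure.pi fun _ : Fin N => μ
    obtain ⟨G, hG⟩ : ∃ G : H → (Fin N → Ω) → ℝ, ∀ v S, G v S =
        fmax fun t => inner ℝ (W t) v + ∑ i, ((∫ ω, f t ω ∂μ) - f t (S i)) :=
      ⟨_, fun _ _ => rfl⟩
    have hGN : Measurable fun p : H × (Fin N → Ω) => G p.1 p.2 := by
      simpa only [hG] using hGm N
    have hGNb : ∀ (v : H) (S : Fin N → Ω), |G v S| ≤ B * ‖v‖ + N * (c + c) := by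
      simpa only [hG] using hGb N
    simp only [← hG] at ih
    have hGx : ∀ s : ℝ, Measurable fun p : (Fin N → Ω) × Ω => G (w + s • x p.2) p.1 := by
      intro s
      have hpair : Measurable fun p : (Fin N → Ω) × Ω => (w + s • x p.2, p.1) :=
        (((hx.comp measurable_snd).const_smul s).const_add w).prodMk measurable_fst
      exact hGN.comp hpair
    have hGxb : ∀ (s : ℝ) (p : (Fin N → Ω) × Ω), |G (w + s • x p.2) p.1| ≤
        B * (‖w‖ + |s| * R) + N * (c + c) := by
      intro s p
      refine (hGNb _ _).trans ?_
      have : ‖w + s • x p.2‖ ≤ ‖w‖ + |s| * R := by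
        refine (norm_add_le _ _).trans ?_
        rw [norm_smul, Real.norm_eq_abs]
        have := mul_le_mul_of_nonneg_left (hxR p.2) (abs_nonneg s)
        linarith
      have := mul_le_mul_of_nonneg_left this hB
      linarith
    have hGi : ∀ s : ℝ, Integrable (fun p : (Fin N → Ω) × Ω => G (w + s • x p.2) p.1)
        (P.prod μ) := fun s => integrable_of_abs_le (hGx s) (hGxb s)
    have hGi' : ∀ (v : H), Integrable (G v) P := fun v =>
      integrable_of_abs_le (hGN.comp measurable_prodMk_left) (hGNb v)
    set Q : (Fin N → Ω) → Ω → ℝ := fun S y =>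
      (G (w + (2 * ρ) • x y) S + G (w + (-(2 * ρ)) • x y) S) / 2 with hQ
    have hQi : Integrable (Function.uncurry Q) (P.prod μ) :=
      ((hGi (2 * ρ)).add (hGi (-(2 * ρ)))).div_const 2
    have hG1 : Measurable fun S : Fin (N + 1) → Ω =>
        fmax fun t => inner ℝ (W t) w + ∑ i, ((∫ ω, f t ω ∂μ) - f t (S i)) :=
      (hGm (N + 1)).comp measurable_prodMk_left
    rw [integral_pi_succ μ hG1 (hGb (N + 1) w)]
    calc _ ≤ ∫ S, ∫ y, Q S y ∂μ ∂P := by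
          refine integral_mono ?_ hQi.integral_prod_left fun S => ?_
          · refine integrable_of_abs_le (M := B * ‖w‖ + ((N + 1 : ℕ) : ℝ) * (c + c)) ?_ fun S =>
              abs_integral_le_of_abs_le fun y => hGb (N + 1) w _
            have : StronglyMeasurable fun p : (Fin N → Ω) × Ω =>
                fmax fun t => inner ℝ (W t) w + ∑ i, ((∫ ω, f t ω ∂μ) -
                  f t ((Fin.cons p.2 p.1 : Fin (N + 1) → Ω) i)) :=
              (hG1.comp (measurable_fin_cons.comp measurable_swap)).stronglyMeasurable
            exact this.integral_prod_right'.measurable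
          · have h := integral_fmax_symm_le μ hf (a := fun t ω => ρ * inner ℝ (W t) (x ω))
              (fun t => (measurable_const.inner hx).const_mul ρ) (A := ρ * (B * R)) hfc
              (fun t ω => by
                rw [abs_mul, abs_of_nonneg hρ]
                exact mul_le_mul_of_nonneg_left ((hin t _).trans
                  (mul_le_mul_of_nonneg_left (hxR ω) hB)) hρ)
              (fun s t ω => by
                rw [← mul_sub, abs_mul, abs_of_nonneg hρ]
                exact hlip s t ω)
              (fun t => inner ℝ (W t) w + ∑ i, ((∫ ω, f t ω ∂μ) - f t (S i)))
            refine (le_of_eq ?_).trans (h.trans (le_of_eq ?_))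
            · refine integral_congr_ae (Filter.Eventually.of_forall fun y => ?_)
              simp only [Fin.sum_univ_succ, Fin.cons_zero, Fin.cons_succ]
              congr 1
              ext t
              ring
            · refine integral_congr_ae (Filter.Eventually.of_forall fun y => ?_)
              simp only [hQ, hG, inner_add_right, inner_smul_right]
              congr 2 <;>
              · congr 1
                ext t
                ring
      _ = ∫ y, ∫ S, Q S y ∂P ∂μ := integral_integral_swap hQi
      _ ≤ ∫ y, B * √(‖w‖ ^ 2 + ((N + 1 : ℕ) : ℝ) * (2 * ρ * R) ^ 2) ∂μ := by
          refine integral_mono hQi.integral_prod_right (integrable_const _) fun y => ?_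
          simp only [hQ]
          rw [integral_div, integral_add (hGi' _) (hGi' _)]
          have h1 := ih (w + (2 * ρ) • x y)
          have h2 := ih (w + (-(2 * ρ)) • x y)
          have hv : ‖(2 * ρ) • x y‖ ^ 2 ≤ (2 * ρ * R) ^ 2 := by
            rw [norm_smul, Real.norm_eq_abs, abs_of_nonneg (by positivity)]
            have := hxR y
            gcongr
          have h3 := sqrt_avg_le w ((2 * ρ) • x y)
            (r := N * (2 * ρ * R) ^ 2) (by positivity) hv
          rw [neg_smul, ← sub_eq_add_neg] at h2 ⊢
          have h4 : ‖w‖ ^ 2 + ((N + 1 : ℕ) : ℝ) * (2 * ρ * R) ^ 2 =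
              ‖w‖ ^ 2 + (N * (2 * ρ * R) ^ 2 + (2 * ρ * R) ^ 2) := by
            push_cast; ring
          rw [h4]
          have h5 := mul_le_mul_of_nonneg_left h3 hB
          linarith
      _ = _ := by simp

end Rademacher

/-! ### Uniform deviation over a ball -/

section Uniform

variable {Ω : Type*} [MeasurableSpace Ω]
  {H : Type*} [NormedAddCommGroup H] [InnerProductSpace ℝ H] [MeasurableSpace H] [BorelSpace H]
  [SecondCountableTopology H]

/-- Uniform deviation bound for a finite class, from McDiarmid's inequality applied to the
maximal deviation and the bound on its expectation. -/
lemma measureReal_finite_class_le (μ : Measure Ω) [IsProbabilityMeasure μ]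
    {ι : Type*} [Fintype ι] [Nonempty ι]
    {W : ι → H} {B R ρ c δ : ℝ} (hB : 0 ≤ B) (hR : 0 ≤ R) (hρ : 0 ≤ ρ) (hc : 0 < c)
    (hδ : δ ∈ Set.Ioo (0 : ℝ) 1) (hW : ∀ t, ‖W t‖ ≤ B)
    {x : Ω → H} (hx : Measurable x) (hxR : ∀ ω, ‖x ω‖ ≤ R)
    {f : ι → Ω → ℝ} (hf : ∀ t, Measurable (f t)) (hfc : ∀ t ω, |f t ω| ≤ c)
    (hlip : ∀ s t ω, |f s ω - f t ω| ≤ ρ * |inner ℝ (W s) (x ω) - inner ℝ (W t) (x ω)|)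
    {N : ℕ} (hN : 0 < N) :
    (Measure.pi fun _ : Fin N => μ).real
      {S | ∃ t, 2 * ρ * B * R * √N + c * √(2 * N * Real.log (2 / δ)) <
        ∑ i, ((∫ ω, f t ω ∂μ) - f t (S i))} ≤ δ := by
  obtain ⟨hδ0, hδ1⟩ := hδ
  have hNr : (0 : ℝ) < N := by exact_mod_cast hN
  have hlog : 0 < Real.log (2 / δ) := Real.log_pos (by rw [lt_div_iff₀ hδ0]; linarith)
  set P := Measure.pi fun _ : Fin N => μ
  set F : (Fin N → Ω) → ℝ := fun S => fmax fun t => ∑ i, ((∫ ω, f t ω ∂μ) - f t (S i)) with hF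
  have hEc : ∀ t, |∫ ω, f t ω ∂μ| ≤ c := fun t => abs_integral_le_of_abs_le (hfc t)
  have hFm : Measurable F := measurable_fmax fun t =>
    Finset.measurable_sum _ fun i _ => ((hf t).comp (measurable_pi_apply i)).const_sub _
  have hFb : ∀ S, |F S| ≤ N * (c + c) := by
    intro S
    refine abs_fmax_le fun t => (Finset.abs_sum_le_sum_abs _ _).trans ?_
    refine (Finset.sum_le_card_nsmul _ _ (c + c) fun i _ =>
      (abs_sub _ _).trans (add_le_add (hEc t) (hfc t _))).trans (le_of_eq ?_)
    simp [mul_add]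
  have hFd : BoundedDiff F (2 * c) := by
    intro i S T hST
    refine fmax_sub_fmax_le fun t => ?_
    rw [← Finset.sum_sub_distrib, Finset.sum_eq_single i
      (fun j _ hj => by rw [hST j hj, sub_self]) (fun h => absurd (Finset.mem_univ i) h)]
    have h1 := abs_le.1 (hfc t (S i))
    have h2 := abs_le.1 (hfc t (T i))
    linarith [h1.1, h2.2]
  have hEF : ∫ S, F S ∂P ≤ 2 * ρ * B * R * √N := by
    have h := integral_fmax_dev_le μ hB hρ hW hx hxR hf hfc hlip N 0
    simp only [inner_zero_right, zero_add, norm_zero, ne_eq, OfNat.ofNat_ne_zero,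
      not_false_eq_true, zero_pow] at h
    rw [Real.sqrt_mul hNr.le, Real.sqrt_sq (by positivity)] at h
    refine h.trans (le_of_eq ?_)
    ring
  set ε := c * √(2 * N * Real.log (2 / δ)) with hε
  have htail := measure_ge_le_of_boundedDiff μ hFm hFb hFd (ε := ε) (by positivity)
  have hval : Real.exp (-ε ^ 2 / (2 * (N * (2 * c) ^ 2 / 4))) = δ / 2 := by
    have : -ε ^ 2 / (2 * (N * (2 * c) ^ 2 / 4)) = -Real.log (2 / δ) := by
      rw [hε, mul_pow, Real.sq_sqrt (by positivity)]
      field_simp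
      ring
    rw [this, Real.exp_neg, Real.exp_log (by positivity), inv_div]
  rw [hval] at htail
  refine (measureReal_mono ?_).trans (htail.trans (by linarith))
  rintro S ⟨t, ht⟩
  have h1 := le_fmax (fun t => ∑ i, ((∫ ω, f t ω ∂μ) - f t (S i))) t
  change _ ≤ F S
  change _ ≤ F S at h1
  linarith

/-- Uniform deviation bound over a ball: a countable dense set of weights is an increasing union
of finite classes, and both risks are continuous in the weight. -/
lemma exists_uniform_dev_set (μ : Measure Ω) [IsProbabilityMeasure μ]
    {B R ρ c δ : ℝ} (hB : 0 ≤ B) (hR : 0 ≤ R) (hρ : 0 ≤ ρ) (hc : 0 ≤ c)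
    (hδ : δ ∈ Set.Ioo (0 : ℝ) 1)
    {x : Ω → H} (hx : Measurable x) (hxR : ∀ ω, ‖x ω‖ ≤ R)
    {φ : ℝ → Ω → ℝ} (hφ : Measurable fun p : ℝ × Ω => φ p.1 p.2)
    (hlip : ∀ ω a b, |φ a ω - φ b ω| ≤ ρ * |a - b|)
    (hbdd : ∀ a ∈ Set.Icc (-(B * R)) (B * R), ∀ ω, |φ a ω| ≤ c)
    {N : ℕ} (hN : 0 < N) :
    ∃ E : Set (Fin N → Ω), MeasurableSet E ∧
      ENNReal.ofReal (1 - δ) ≤ (Measure.pi fun _ : Fin N => μ) E ∧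
      ∀ S ∈ E, ∀ w : H, ‖w‖ ≤ B →
        ∑ i, ((∫ ω, φ (inner ℝ w (x ω)) ω ∂μ) - φ (inner ℝ w (x (S i))) (S i)) ≤
          2 * ρ * B * R * √N + c * √(2 * N * Real.log (2 / δ)) := by
  have hfc : ∀ w : H, ‖w‖ ≤ B → ∀ ω, |φ (inner ℝ w (x ω)) ω| ≤ c := by
    intro w hw ω
    refine hbdd _ (abs_le.1 ((abs_real_inner_le_norm _ _).trans ?_)) ω
    exact mul_le_mul hw (hxR ω) (norm_nonneg _) hB
  have hfm : ∀ w : H, Measurable fun ω => φ (inner ℝ w (x ω)) ω := fun w =>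
    hφ.comp ((measurable_const.inner hx).prodMk measurable_id)
  -- For `c = 0` the tail exponent is a division by zero, but then the loss vanishes.
  rcases hc.eq_or_lt with rfl | hc
  · refine ⟨Set.univ, MeasurableSet.univ, ?_, fun S _ w hw => ?_⟩
    · rw [measure_univ]
      exact ENNReal.ofReal_le_one.2 (by linarith [hδ.1])
    · have h0 : ∀ ω, φ (inner ℝ w (x ω)) ω = 0 := fun ω =>
        abs_nonpos_iff.1 (hfc w hw ω)
      simp only [h0, integral_zero, sub_zero, Finset.sum_const_zero]
      positivity
  set P := Measure.pi fun _ : Fin N => μ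
  set b := 2 * ρ * B * R * √N + c * √(2 * N * Real.log (2 / δ)) with hb
  have : Nonempty (Metric.closedBall (0 : H) B) := ⟨⟨0, by simpa using hB⟩⟩
  set d : ℕ → Metric.closedBall (0 : H) B := TopologicalSpace.denseSeq _ with hd
  have hdB : ∀ k, ‖(d k : H)‖ ≤ B := fun k => mem_closedBall_zero_iff.1 (d k).2
  set dev : H → (Fin N → Ω) → ℝ := fun w S =>
    ∑ i, ((∫ ω, φ (inner ℝ w (x ω)) ω ∂μ) - φ (inner ℝ w (x (S i))) (S i)) with hdev
  have hdevm : ∀ w, Measurable (dev w) := fun w =>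
    Finset.measurable_sum _ fun i _ => ((hfm w).comp (measurable_pi_apply i)).const_sub _
  set bad : ℕ → Set (Fin N → Ω) := fun k => {S | ∃ t : Fin (k + 1), b < dev (d t) S} with hbad
  have hbadm : ∀ k, MeasurableSet (bad k) := by
    intro k
    have : bad k = ⋃ t : Fin (k + 1), {S | b < dev (d t) S} := by
      ext S; simp [hbad]
    rw [this]
    exact MeasurableSet.iUnion fun t => measurableSet_lt measurable_const (hdevm _)
  have hbadP : ∀ k, P (bad k) ≤ ENNReal.ofReal δ := by
    intro k
    have h := measureReal_finite_class_le μ (W := fun t : Fin (k + 1) => (d t : H)) hB hR hρ hc hδ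
      (fun t => hdB t) hx hxR (f := fun t ω => φ (inner ℝ (d t : H) (x ω)) ω)
      (fun t => hfm _) (fun t => hfc _ (hdB t)) (fun s t ω => hlip ω _ _) hN
    rw [← ofReal_measureReal]
    exact ENNReal.ofReal_le_ofReal h
  have hmono : Monotone bad := by
    rintro k l hkl S ⟨t, ht⟩
    exact ⟨⟨t, by omega⟩, ht⟩
  refine ⟨(⋃ k, bad k)ᶜ, (MeasurableSet.iUnion hbadm).compl, ?_, fun S hS => ?_⟩
  · rw [prob_compl_eq_one_sub (MeasurableSet.iUnion hbadm), hmono.measure_iUnion,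
      ENNReal.ofReal_sub _ hδ.1.le, ENNReal.ofReal_one]
    exact tsub_le_tsub_left (iSup_le hbadP) _
  · have hgood : ∀ k, dev (d k) S ≤ b := by
      intro k
      by_contra! hk
      exact hS (Set.mem_iUnion.2 ⟨k, ⟨⟨k, by omega⟩, hk⟩⟩)
    have hfl : ∀ ω, LipschitzWith (Real.toNNReal (ρ * R))
        fun w : Metric.closedBall (0 : H) B => φ (inner ℝ (w : H) (x ω)) ω := by
      intro ω
      refine LipschitzWith.of_dist_le_mul fun v w => ?_
      rw [Real.coe_toNNReal _ (by positivity), Real.dist_eq, Subtype.dist_eq, dist_eq_norm]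
      refine (hlip ω _ _).trans ?_
      rw [← inner_sub_left, mul_assoc]
      refine mul_le_mul_of_nonneg_left ((abs_real_inner_le_norm _ _).trans ?_) hρ
      rw [mul_comm]
      exact mul_le_mul_of_nonneg_right (hxR ω) (norm_nonneg _)
    have hcont : Continuous fun w : Metric.closedBall (0 : H) B => dev w S := by
      refine continuous_finsetSum _ fun i _ => Continuous.sub ?_ (hfl (S i)).continuous
      refine continuous_of_dominated (bound := fun _ => c)
        (fun w => (hfm _).aestronglyMeasurable)
        (fun w => Filter.Eventually.of_forall (hfc _ (mem_closedBall_zero_iff.1 w.2)))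
        (integrable_const _) (Filter.Eventually.of_forall fun ω => (hfl ω).continuous)
    intro w hw
    exact (TopologicalSpace.denseRange_denseSeq (Metric.closedBall (0 : H) B)).induction_on
      (p := fun w => dev w S ≤ b) ⟨w, by simpa using hw⟩
      (isClosed_le hcont continuous_const) hgood

end Uniform

/-! ### Feature map of the form `BV V` -/

section FeatureMap

/-- A feature map for the form `BV V`: with `V = ∑ k, v k (v k)ᵀ`, the coordinates of the
features of `X` are `(X v k) i / √‖V‖_F`. -/
lemma exists_feature_map {n : ℕ} (m : ℕ) {V : Matrix (Fin n) (Fin n) ℝ} (hV : V.PosSemidef) :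
    ∃ (K : ℕ) (ψ : Matrix (Fin m) (Fin n) ℝ → EuclideanSpace ℝ (Fin m × Fin K)),
      Measurable ψ ∧ ∀ W X, BV V W X = inner ℝ (ψ W) (ψ X) := by
  obtain ⟨K, v, hv⟩ := Matrix.posSemidef_iff_eq_sum_vecMulVec.1 hV
  refine ⟨K, fun X => WithLp.toLp 2 fun p => (∑ j, X p.1 j * v p.2 j) / √(frobNorm V), ?_, ?_⟩
  · refine (WithLp.measurable_toLp 2 _).comp (measurable_pi_iff.2 fun p => ?_)
    refine Measurable.div_const (Finset.measurable_sum _ fun j _ => Measurable.mul_const ?_ _) _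
    exact (measurable_pi_apply j).comp (measurable_pi_apply p.1)
  · intro W X
    have hVe : ∀ a b, V a b = ∑ k, v k a * v k b := by
      intro a b
      conv_lhs => rw [hv]
      simp [Matrix.sum_apply, Matrix.vecMulVec_apply]
    have hs : √(frobNorm V) * √(frobNorm V) = frobNorm V :=
      Real.mul_self_sqrt (Real.sqrt_nonneg _)
    have key : frobInner (Wᵀ * X) V =
        ∑ p : Fin m × Fin K, (∑ j, W p.1 j * v p.2 j) * (∑ j, X p.1 j * v p.2 j) := by
      simp only [frobInner, Matrix.mul_apply, Matrix.transpose_apply, hVe]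
      simp_rw [Fintype.sum_prod_type, Finset.sum_mul_sum]
      calc _ = ∑ a, ∑ i, ∑ b, ∑ k, W i a * X i b * (v k a * v k b) :=
            Finset.sum_congr rfl fun a _ => Finset.sum_comm
        _ = ∑ i, ∑ a, ∑ b, ∑ k, W i a * X i b * (v k a * v k b) := Finset.sum_comm
        _ = ∑ i, ∑ a, ∑ k, ∑ b, W i a * X i b * (v k a * v k b) :=
            Finset.sum_congr rfl fun i _ => Finset.sum_congr rfl fun a _ => Finset.sum_comm
        _ = ∑ i, ∑ k, ∑ a, ∑ b, W i a * X i b * (v k a * v k b) :=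
            Finset.sum_congr rfl fun i _ => Finset.sum_comm
        _ = _ := by simp_rw [mul_mul_mul_comm]
    rw [BV, key, PiLp.inner_apply, Finset.sum_div]
    refine Finset.sum_congr rfl fun p _ => ?_
    simp only [RCLike.inner_apply, conj_trivial]
    rw [div_mul_div_comm, hs, mul_comm]

end FeatureMap

/-- Generalization bound for the kernel support matrix machine: with probability
    at least `1 − δ` over an i.i.d. sample `S ∼ D^N`, for all `W'` with
    `‖W'‖_H(V) ≤ B'`, `L_D(W') ≤ L_S(W') + 2ρB'R'/√N + c'√(2 ln(2/δ)/N)`. -/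
theorem stmt_1 (m n N : ℕ) (hm : 0 < m) (hn : 0 < n) (hN : 0 < N)
    (V : Matrix (Fin n) (Fin n) ℝ) (hV : V.PosSemidef) (hV0 : V ≠ 0)
    (R' B' ρ c' δ : ℝ) (hR' : 0 < R') (hB' : 0 < B') (hρ : 0 < ρ) (hc' : 0 ≤ c')
    (hδ : δ ∈ Set.Ioo (0 : ℝ) 1)
    {𝒴 : Type*} [MeasurableSpace 𝒴]
    (D : Measure (Matrix (Fin m) (Fin n) ℝ × 𝒴)) [IsProbabilityMeasure D]
    (hD : ∀ᵐ p ∂D, Hnorm V p.1 ≤ R')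
    (Φ : ℝ → 𝒴 → ℝ) (hΦmeas : Measurable fun p : ℝ × 𝒴 => Φ p.1 p.2)
    (hΦlip : ∀ (y : 𝒴) (a b : ℝ), |Φ a y - Φ b y| ≤ ρ * |a - b|)
    (hΦbdd : ∀ a ∈ Set.Icc (-(B' * R')) (B' * R'), ∀ y : 𝒴, |Φ a y| ≤ c') :
    ∃ E : Set (Fin N → Matrix (Fin m) (Fin n) ℝ × 𝒴), MeasurableSet E ∧
      ENNReal.ofReal (1 - δ) ≤ (Measure.pi fun _ : Fin N => D) E ∧
      ∀ S ∈ E, ∀ W' : Matrix (Fin m) (Fin n) ℝ, Hnorm V W' ≤ B' →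
        (∫ p, Φ (BV V W' p.1) p.2 ∂D) ≤
          (1 / N : ℝ) * (∑ i, Φ (BV V W' (S i).1) (S i).2) +
            2 * ρ * B' * R' / Real.sqrt N +
            c' * Real.sqrt (2 * Real.log (2 / δ) / N) := by
  obtain ⟨K, ψ, hψm, hψ⟩ := exists_feature_map m hV
  have hHn : ∀ X : Matrix (Fin m) (Fin n) ℝ, Hnorm V X = ‖ψ X‖ := by
    intro X
    rw [Hnorm, hψ, real_inner_self_eq_norm_sq, Real.sqrt_sq (norm_nonneg _)]
  simp only [hHn] at hD ⊢
  simp only [hψ]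
  -- Features outside the ball of radius `R'`, a null event, are replaced by `0`, so that the
  -- boundedness assumption holds everywhere.
  have hball : MeasurableSet {p : Matrix (Fin m) (Fin n) ℝ × 𝒴 | ‖ψ p.1‖ ≤ R'} :=
    measurableSet_le (hψm.comp measurable_fst).norm measurable_const
  set x : Matrix (Fin m) (Fin n) ℝ × 𝒴 → EuclideanSpace ℝ (Fin m × Fin K) :=
    Set.indicator {p | ‖ψ p.1‖ ≤ R'} fun p => ψ p.1 with hx
  have hxm : Measurable x := (hψm.comp measurable_fst).indicator hball
  have hxR : ∀ p, ‖x p‖ ≤ R' := by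
    intro p
    by_cases hp : ‖ψ p.1‖ ≤ R'
    · rw [hx, Set.indicator_of_mem (by exact hp)]; exact hp
    · rw [hx, Set.indicator_of_notMem (by exact hp), norm_zero]; exact hR'.le
  have hxe : ∀ p : Matrix (Fin m) (Fin n) ℝ × 𝒴, ‖ψ p.1‖ ≤ R' → x p = ψ p.1 := fun p hp =>
    Set.indicator_of_mem (s := {p : Matrix (Fin m) (Fin n) ℝ × 𝒴 | ‖ψ p.1‖ ≤ R'}) hp _
  obtain ⟨E, hEm, hEP, hE⟩ := exists_uniform_dev_set D hB'.le hR'.le hρ.le hc' hδ hxm hxR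
    (φ := fun a p => Φ a p.2) (hΦmeas.comp (measurable_fst.prodMk measurable_snd.snd))
    (fun p a b => hΦlip p.2 a b) (fun a ha p => hΦbdd a ha p.2) hN
  have hnull : ∀ᵐ S ∂(Measure.pi fun _ : Fin N => D), ∀ i, ‖ψ (S i).1‖ ≤ R' :=
    ae_all_iff.2 fun i =>
      (measurePreserving_eval (fun _ : Fin N => D) i).quasiMeasurePreserving.ae hD
  have hgm : MeasurableSet {S : Fin N → Matrix (Fin m) (Fin n) ℝ × 𝒴 |
      ∀ i, ‖ψ (S i).1‖ ≤ R'} := by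
    rw [Set.ofPred_forall]
    exact MeasurableSet.iInter fun i => measurableSet_le
      (hψm.comp (measurable_pi_apply i).fst).norm measurable_const
  refine ⟨E ∩ {S | ∀ i, ‖ψ (S i).1‖ ≤ R'}, hEm.inter hgm, ?_, ?_⟩
  · rw [measure_inter_conull (mem_ae_iff.1 hnull)]
    exact hEP
  · rintro S ⟨hSE, hSR⟩ W hW
    have h := hE S hSE (ψ W) hW
    have hint : ∫ p, Φ (inner ℝ (ψ W) (x p)) p.2 ∂D = ∫ p, Φ (inner ℝ (ψ W) (ψ p.1)) p.2 ∂D := by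
      refine integral_congr_ae ?_
      filter_upwards [hD] with p hp
      rw [hxe p hp]
    have hNr : (0 : ℝ) < N := by exact_mod_cast hN
    have hs : √(N : ℝ) * √N = N := Real.mul_self_sqrt hNr.le
    have hs0 : 0 < √(N : ℝ) := Real.sqrt_pos.2 hNr
    simp only [hint, hxe _ (hSR _), Finset.sum_sub_distrib, Finset.sum_const, Finset.card_univ,
      Fintype.card_fin, nsmul_eq_mul] at h
    have e1 : 2 * ρ * B' * R' / √N * N = 2 * ρ * B' * R' * √N := by
      rw [div_mul_eq_mul_div, div_eq_iff hs0.ne', mul_assoc _ (√(N : ℝ)), hs]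
    have e2 : √(2 * Real.log (2 / δ) / N) * N = √(2 * N * Real.log (2 / δ)) := by
      have e3 : 2 * N * Real.log (2 / δ) = 2 * Real.log (2 / δ) / N * (N : ℝ) ^ 2 := by
        field_simp
      rw [e3, Real.sqrt_mul' _ (sq_nonneg _), Real.sqrt_sq hNr.le]
    refine le_of_mul_le_mul_right ?_ hNr
    rw [add_mul, add_mul, e1, mul_assoc c', e2, mul_right_comm, one_div,
      inv_mul_cancel₀ hNr.ne', one_mul]
    linarith
end
end

section
/- Let N be a positive integer, ρ > 0, and let A ⊆ ℝ^N be a nonempty bounded set. For each i = 1, …, N let Φ_i : ℝ → ℝ be a ρ-Lipschitz function, i.e. |Φ_i(α) − Φ_i(β)| ≤ ρ·|α − β| for all α, β ∈ ℝ. For a ∈ ℝ^N write Φ(a) = (Φ_1(a_1), …, Φ_N(a_N)) and let Φ∘A = {Φ(a) : a ∈ A}. Then R(Φ∘A) ≤ ρ·R(A). -/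
/-!
The Ledoux–Talagrand contraction argument. The set is treated as an index type `ι`, with
coordinate functions `u i : ι → ℝ`, and the coordinates `Φ i ∘ (· i)` are replaced one at a time
by `ρ * (· i)`. For a single coordinate `j`, the sign vectors are paired by flipping the `j`-th
sign. For `a b : ι` the sum of the two paired expressions is
`R a + R b ± (u j a - u j b)`, where `R` does not involve coordinate `j`; it is at most
`R a + R b + |v a - v b|`, and since the two signs `±1` are both available (swap `a` and `b`), this
is bounded by the sum of the two suprema formed with `v` in place of `u j`
(`signSup_add_flip_le`). Summing over all sign vectors gives the one-coordinate replacement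
(`sum_signSup_le_update`), and induction on the set of replaced coordinates finishes the proof.
-/

open Matrix

noncomputable section

/-- The ±1 sign associated to a boolean. -/
def signv (b : Bool) : ℝ := if b then 1 else -1

/-- The Rademacher complexity of a set `A ⊆ ℝ^N`:
    `R(A) = (1/N) · 2^{−N} · Σ_{σ ∈ {−1,1}^N} sup_{a ∈ A} Σᵢ σᵢ aᵢ`. -/
def rademacher {N : ℕ} (A : Set (Fin N → ℝ)) : ℝ :=
  (1 / N : ℝ) * (1 / 2 ^ N) *
    ∑ σ : Fin N → Bool, sSup ((fun a => ∑ i, signv (σ i) * a i) '' A)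

/-- The supremum over `ι` of the signed sum of the coordinate functions `u`, for signs `σ`. -/
def signSup {N : ℕ} {ι : Type*} (u : Fin N → ι → ℝ) (σ : Fin N → Bool) : ℝ :=
  ⨆ a, ∑ i, signv (σ i) * u i a

/-- The sign vector `σ` with its `j`-th sign reversed. -/
def flipSign {N : ℕ} (j : Fin N) (σ : Fin N → Bool) : Fin N → Bool :=
  Function.update σ j (!σ j)

lemma flipSign_involutive {N : ℕ} (j : Fin N) : Function.Involutive (flipSign j) := by
  intro σ
  simp [flipSign]

lemma abs_signv (b : Bool) : |signv b| = 1 := by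
  cases b <;> simp [signv]

lemma signv_not (b : Bool) : signv (!b) = -signv b := by
  cases b <;> simp [signv]

lemma bddAbove_signed {N : ℕ} {ι : Type*} (u : Fin N → ι → ℝ)
    (hu : ∀ i, ∃ C, ∀ a, |u i a| ≤ C) (σ : Fin N → Bool) :
    BddAbove (Set.range fun a => ∑ i, signv (σ i) * u i a) := by
  choose C hC using hu
  refine ⟨∑ i, C i, ?_⟩
  rintro _ ⟨a, rfl⟩
  refine Finset.sum_le_sum fun i _ => (le_abs_self _).trans ?_
  rw [abs_mul, abs_signv, one_mul]
  exact hC i a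

lemma signed_update {N : ℕ} {ι : Type*} (u : Fin N → ι → ℝ) (j : Fin N) (v : ι → ℝ)
    (σ : Fin N → Bool) (a : ι) :
    ∑ i, signv (σ i) * Function.update u j v i a =
      (∑ i ∈ Finset.univ.erase j, signv (σ i) * u i a) + signv (σ j) * v a := by
  rw [← Finset.sum_erase_add _ _ (Finset.mem_univ j)]
  congr 1
  · refine Finset.sum_congr rfl fun i hi => ?_
    rw [Function.update_of_ne (Finset.ne_of_mem_erase hi)]
  · simp

lemma signed_flip_update {N : ℕ} {ι : Type*} (u : Fin N → ι → ℝ) (j : Fin N) (v : ι → ℝ)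
    (σ : Fin N → Bool) (a : ι) :
    ∑ i, signv (flipSign j σ i) * Function.update u j v i a =
      (∑ i ∈ Finset.univ.erase j, signv (σ i) * u i a) - signv (σ j) * v a := by
  rw [signed_update, sub_eq_add_neg]
  congr 1
  · refine Finset.sum_congr rfl fun i hi => ?_
    rw [flipSign, Function.update_of_ne (Finset.ne_of_mem_erase hi)]
  · simp [flipSign, signv_not]

lemma bounded_update {N : ℕ} {ι : Type*} (u : Fin N → ι → ℝ)
    (hu : ∀ i, ∃ C, ∀ a, |u i a| ≤ C) (j : Fin N) (v : ι → ℝ) (hv : ∃ C, ∀ a, |v a| ≤ C) (i) :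
    ∃ C, ∀ a, |Function.update u j v i a| ≤ C := by
  by_cases h : i = j
  · subst h
    simpa using hv
  · simpa [Function.update_of_ne h] using hu i

lemma signSup_add_flip_le {N : ℕ} {ι : Type*} [Nonempty ι] (u : Fin N → ι → ℝ)
    (hu : ∀ i, ∃ C, ∀ a, |u i a| ≤ C) (j : Fin N) (v : ι → ℝ) (hv : ∃ C, ∀ a, |v a| ≤ C)
    (huv : ∀ a b, |u j a - u j b| ≤ |v a - v b|) (σ : Fin N → Bool) :
    signSup u σ + signSup u (flipSign j σ) ≤
      signSup (Function.update u j v) σ + signSup (Function.update u j v) (flipSign j σ) := by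
  have hb := bounded_update u hu j v hv
  refine ciSup_add_ciSup_le fun a b => ?_
  have e1 := signed_update u j (u j) σ a
  have e2 := signed_flip_update u j (u j) σ b
  rw [Function.update_eq_self] at e1 e2
  rw [e1, e2]
  have le1 (c : ι) := le_ciSup (bddAbove_signed _ hb σ) c
  have le2 (c : ι) := le_ciSup (bddAbove_signed _ hb (flipSign j σ)) c
  simp only [signed_update] at le1
  simp only [signed_flip_update] at le2
  have l1a := le1 a
  have l1b := le1 b
  have l2a := le2 a
  have l2b := le2 b
  unfold signSup
  simp only [signed_flip_update]
  simp only [signed_update]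
  have key : signv (σ j) * u j a - signv (σ j) * u j b ≤
      |signv (σ j) * v a - signv (σ j) * v b| := by
    rw [← mul_sub, ← mul_sub, abs_mul, abs_signv, one_mul]
    refine (le_abs_self _).trans ?_
    rw [abs_mul, abs_signv, one_mul]
    exact huv a b
  -- If the difference is negative, `a` and `b` exchange roles in the two suprema.
  rcases abs_cases (signv (σ j) * v a - signv (σ j) * v b) with ⟨h, _⟩ | ⟨h, _⟩ <;>
    rw [h] at key <;> linarith

lemma sum_signSup_le_update {N : ℕ} {ι : Type*} [Nonempty ι] (u : Fin N → ι → ℝ)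
    (hu : ∀ i, ∃ C, ∀ a, |u i a| ≤ C) (j : Fin N) (v : ι → ℝ) (hv : ∃ C, ∀ a, |v a| ≤ C)
    (huv : ∀ a b, |u j a - u j b| ≤ |v a - v b|) :
    ∑ σ, signSup u σ ≤ ∑ σ, signSup (Function.update u j v) σ := by
  have hflip (w : Fin N → ι → ℝ) : ∑ σ, signSup w (flipSign j σ) = ∑ σ, signSup w σ :=
    Equiv.sum_comp (flipSign_involutive j).toPerm (signSup w)
  have h := Finset.sum_le_sum fun σ (_ : σ ∈ Finset.univ) =>
    signSup_add_flip_le u hu j v hv huv σ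
  rw [Finset.sum_add_distrib, Finset.sum_add_distrib, hflip, hflip] at h
  linarith

/-- Contraction for coordinate functions: pointwise smaller oscillation in every coordinate gives
a smaller average of signed suprema. -/
lemma sum_signSup_le {N : ℕ} {ι : Type*} [Nonempty ι] (u v : Fin N → ι → ℝ)
    (hu : ∀ i, ∃ C, ∀ a, |u i a| ≤ C) (hv : ∀ i, ∃ C, ∀ a, |v i a| ≤ C)
    (huv : ∀ i a b, |u i a - u i b| ≤ |v i a - v i b|) :
    ∑ σ, signSup u σ ≤ ∑ σ, signSup v σ := by
  have main : ∀ s : Finset (Fin N), ∑ σ, signSup u σ ≤ ∑ σ, signSup (s.piecewise v u) σ := by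
    intro s
    induction s using Finset.induction_on with
    | empty => simp
    | insert j s hj ih =>
      rw [Finset.piecewise_insert]
      refine ih.trans (sum_signSup_le_update _ (fun i => ?_) j (v j) (hv j) fun a b => ?_)
      · by_cases h : i ∈ s
        · simpa [h] using hv i
        · simpa [h] using hu i
      · simpa [hj] using huv j a b
  simpa using main Finset.univ

/-- Contraction lemma: if each `Φᵢ` is `ρ`-Lipschitz and `A ⊆ ℝ^N` is a nonempty
    bounded set, then `R(Φ∘A) ≤ ρ·R(A)`. -/
theorem stmt_6 {N : ℕ} (hN : 0 < N) (ρ : ℝ) (hρ : 0 < ρ)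
    (A : Set (Fin N → ℝ)) (hA : A.Nonempty) (hAb : Bornology.IsBounded A)
    (Φ : Fin N → ℝ → ℝ)
    (hΦ : ∀ i, ∀ α β : ℝ, |Φ i α - Φ i β| ≤ ρ * |α - β|) :
    rademacher ((fun a i => Φ i (a i)) '' A) ≤ ρ * rademacher A := by
  have : Nonempty A := hA.to_subtype
  obtain ⟨C, hC⟩ := hAb.exists_norm_le
  have hcoord (i : Fin N) (a : A) : |a.1 i| ≤ C :=
    (norm_le_pi_norm a.1 i).trans (hC a.1 a.2)
  obtain ⟨a₀⟩ := this
  have : Nonempty A := ⟨a₀⟩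
  have h := sum_signSup_le (fun i (a : A) => Φ i (a.1 i)) (fun i (a : A) => ρ * a.1 i)
    (fun i => ⟨ρ * (C + C) + |Φ i (a₀.1 i)|, fun a => ?_⟩)
    (fun i => ⟨ρ * C, fun a => ?_⟩) (fun i a b => ?_)
  · have e1 (σ : Fin N → Bool) :
        sSup ((fun a => ∑ i, signv (σ i) * a i) '' ((fun a i => Φ i (a i)) '' A)) =
          signSup (fun i (a : A) => Φ i (a.1 i)) σ := by
      rw [Set.image_image, sSup_image']
      rfl
    have e2 (σ : Fin N → Bool) : signSup (fun i (a : A) => ρ * a.1 i) σ =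
        ρ * sSup ((fun a => ∑ i, signv (σ i) * a i) '' A) := by
      rw [sSup_image', signSup, Real.mul_iSup_of_nonneg hρ.le]
      simp only [Finset.mul_sum, mul_left_comm]
    simp only [e2, ← Finset.mul_sum] at h
    unfold rademacher
    simp only [e1]
    rw [mul_left_comm ρ]
    exact mul_le_mul_of_nonneg_left h (by positivity)
  · have h1 := hΦ i (a.1 i) (a₀.1 i)
    have h2 := abs_sub (a.1 i) (a₀.1 i)
    have h3 := abs_sub_abs_le_abs_sub (Φ i (a.1 i)) (Φ i (a₀.1 i))
    have h4 : ρ * |a.1 i - a₀.1 i| ≤ ρ * (C + C) :=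
      mul_le_mul_of_nonneg_left (by linarith [hcoord i a, hcoord i a₀]) hρ.le
    linarith
  · rw [abs_mul, abs_of_pos hρ]
    exact mul_le_mul_of_nonneg_left (hcoord i a) hρ.le
  · rw [← mul_sub, abs_mul, abs_of_pos hρ]
    exact hΦ i _ _
end
end

section
/- Let m and k be positive integers with k ≥ 2, and let A = {a_1, …, a_k} be a finite set of vectors in ℝ^m. Let ā = (1/k) Σ_{i=1}^k a_i. Then R(A) ≤ (max_{1≤i≤k} ‖a_i − ā‖_2) · √(2·ln k) / m, where ‖·‖_2 is the Euclidean norm on ℝ^m. -/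
/-!
Write `a i = ā + b i`. The uniform average over the signs `σ` of `⟨σ, ā⟩` vanishes, so it suffices
to bound the average of `max_i ⟨σ, b i⟩`. For `t > 0`, bound `exp (t * max_i ⟨σ, b i⟩)` by
`∑ i, exp (t * ⟨σ, b i⟩)`; the sum over `σ` of each term factors over coordinates
(`sum_exp_sign`), and `cosh x ≤ exp (x ^ 2 / 2)` bounds its average by `exp (t ^ 2 * D ^ 2 / 2)`
when `‖b i‖ ≤ D`. Comparing `exp` with its tangent line at `T = log k + t ^ 2 * D ^ 2 / 2` (in place
of Jensen's inequality) gives `t * average ≤ T`. The choice `t = √(2 log k) / D` yields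
`average ≤ D * √(2 log k)`. This requires `D > 0`, so it is applied to every `D` strictly above
`max_i ‖b i‖` (which may be zero), and `D` is then let go down to this maximum.
-/

open Matrix

noncomputable section

theorem sum_sign_eq_zero {m : ℕ} (c : Fin m → ℝ) :
    ∑ σ : Fin m → Bool, ∑ j, signv (σ j) * c j = 0 := by
  -- Flipping all signs is a bijection that negates the summand.
  have h := Equiv.sum_comp (Equiv.arrowCongr (Equiv.refl (Fin m)) Equiv.boolNot)
    (fun σ : Fin m → Bool => ∑ j, signv (σ j) * c j)
  have h2 : ∀ σ : Fin m → Bool,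
      ∑ j, signv ((Equiv.arrowCongr (Equiv.refl (Fin m)) Equiv.boolNot) σ j) * c j
        = -∑ j, signv (σ j) * c j := by
    intro σ
    rw [← Finset.sum_neg_distrib]
    refine Finset.sum_congr rfl fun j _ => ?_
    cases hj : σ j <;> simp [signv, hj]
  simp only [h2, Finset.sum_neg_distrib] at h
  linarith

theorem sum_exp_sign {m : ℕ} (b : Fin m → ℝ) :
    ∑ σ : Fin m → Bool, Real.exp (∑ j, signv (σ j) * b j) = 2 ^ m * ∏ j, Real.cosh (b j) := by
  have h := Fintype.prod_sum (fun (j : Fin m) (s : Bool) => Real.exp (signv s * b j))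
  simp only [Real.exp_sum]
  rw [← h]
  have h2 : ∀ j, ∑ s : Bool, Real.exp (signv s * b j) = 2 * Real.cosh (b j) := by
    intro j
    simp [signv, Real.cosh_eq]
    ring
  simp only [h2, Finset.prod_mul_distrib]
  simp

/-- Moment generating function bound: a Rademacher sum is sub-Gaussian. -/
theorem sum_exp_sign_le {m : ℕ} (b : Fin m → ℝ) (t D : ℝ) (hb : ∑ j, b j ^ 2 ≤ D ^ 2) :
    ∑ σ : Fin m → Bool, Real.exp (t * ∑ j, signv (σ j) * b j)
      ≤ 2 ^ m * Real.exp (t ^ 2 * D ^ 2 / 2) := by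
  have h := sum_exp_sign (fun j => t * b j)
  have h2 : ∀ σ : Fin m → Bool,
      t * ∑ j, signv (σ j) * b j = ∑ j, signv (σ j) * (t * b j) := by
    intro σ
    rw [Finset.mul_sum]
    exact Finset.sum_congr rfl fun j _ => by ring
  simp only [h2, h]
  gcongr
  calc ∏ j, Real.cosh (t * b j) ≤ ∏ j, Real.exp ((t * b j) ^ 2 / 2) :=
        Finset.prod_le_prod (fun j _ => (Real.cosh_pos _).le)
          fun j _ => Real.cosh_le_exp_half_sq _
    _ = Real.exp (t ^ 2 * (∑ j, b j ^ 2) / 2) := by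
        rw [← Real.exp_sum, Finset.mul_sum, Finset.sum_div]
        simp only [mul_pow]
    _ ≤ _ := by gcongr

/-- The maximal inequality at a fixed scale `D`, for `M σ` a value attained by some
`⟨σ, b i⟩`. -/
theorem sum_max_le {m k : ℕ} (hk : 2 ≤ k) (b : Fin k → Fin m → ℝ) (M : (Fin m → Bool) → ℝ)
    (hM : ∀ σ, ∃ i, M σ = ∑ j, signv (σ j) * b i j) (D : ℝ) (hD : 0 < D)
    (hb : ∀ i, ∑ j, b i j ^ 2 ≤ D ^ 2) :
    ∑ σ, M σ ≤ 2 ^ m * (D * √(2 * Real.log k)) := by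
  have hk1 : (1 : ℝ) < k := by exact_mod_cast hk
  have hlog : 0 < Real.log k := Real.log_pos hk1
  set L := √(2 * Real.log k) with hL
  have hLpos : 0 < L := Real.sqrt_pos.2 (by positivity)
  have hL2 : L ^ 2 = 2 * Real.log k := Real.sq_sqrt (by positivity)
  set t := L / D with ht
  have htpos : 0 < t := by positivity
  have htD : t * D = L := by rw [ht]; field_simp
  -- At this `t` the two terms of `T` coincide, so `T = L ^ 2`.
  have hT : (k : ℝ) * Real.exp (t ^ 2 * D ^ 2 / 2) = Real.exp (L ^ 2) := by
    rw [← mul_pow, htD]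
    nth_rewrite 1 [← Real.exp_log (zero_lt_one.trans hk1)]
    rw [← Real.exp_add]
    congr 1
    linarith
  have hE : ∑ σ, Real.exp (t * M σ) ≤ 2 ^ m * Real.exp (L ^ 2) := by
    calc ∑ σ, Real.exp (t * M σ)
        ≤ ∑ σ : Fin m → Bool, ∑ i, Real.exp (t * ∑ j, signv (σ j) * b i j) := by
          refine Finset.sum_le_sum fun σ _ => ?_
          obtain ⟨i, hi⟩ := hM σ
          rw [hi]
          exact Finset.single_le_sum
            (f := fun i => Real.exp (t * ∑ j, signv (σ j) * b i j))
            (fun i _ => (Real.exp_pos _).le) (Finset.mem_univ i)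
      _ = ∑ i, ∑ σ : Fin m → Bool, Real.exp (t * ∑ j, signv (σ j) * b i j) := by
          rw [Finset.sum_comm]
      _ ≤ ∑ _i : Fin k, 2 ^ m * Real.exp (t ^ 2 * D ^ 2 / 2) :=
          Finset.sum_le_sum fun i _ => sum_exp_sign_le _ _ _ (hb i)
      _ = 2 ^ m * Real.exp (L ^ 2) := by
          rw [← hT]
          simp
          ring
  have hlin : ∀ σ, t * M σ - L ^ 2 + 1 ≤ Real.exp (t * M σ) / Real.exp (L ^ 2) := by
    intro σ
    rw [← Real.exp_sub]
    exact Real.add_one_le_exp _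
  have hsum : t * ∑ σ, M σ - 2 ^ m * L ^ 2 + 2 ^ m ≤ 2 ^ m := by
    calc t * ∑ σ, M σ - 2 ^ m * L ^ 2 + 2 ^ m = ∑ σ, (t * M σ - L ^ 2 + 1) := by
          simp [Finset.sum_add_distrib, Finset.sum_sub_distrib, Finset.mul_sum]
      _ ≤ ∑ σ, Real.exp (t * M σ) / Real.exp (L ^ 2) := Finset.sum_le_sum fun σ _ => hlin σ
      _ ≤ 2 ^ m := by
          rw [← Finset.sum_div, div_le_iff₀ (Real.exp_pos _)]
          exact hE
  have h3 : t * ∑ σ, M σ ≤ t * (2 ^ m * (D * L)) := by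
    have : t * (2 ^ m * (D * L)) = 2 ^ m * L ^ 2 := by rw [← htD]; ring
    linarith
  exact le_of_mul_le_mul_left h3 htpos


/-- Massart's lemma: for a finite set `A = {a_1, …, a_k} ⊆ ℝ^m` with mean `ā`,
    `R(A) ≤ (max_i ‖a_i − ā‖_2) · √(2 ln k) / m`. -/
theorem stmt_8 {m k : ℕ} (hm : 0 < m) (hk : 2 ≤ k) (a : Fin k → Fin m → ℝ) :
    rademacher (Set.range a) ≤
      (⨆ i : Fin k, Real.sqrt (∑ j, (a i j - (1 / k : ℝ) * ∑ l, a l j) ^ 2)) *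
        Real.sqrt (2 * Real.log k) / m := by
  have hk1 : (1 : ℝ) < k := by exact_mod_cast hk
  have hm0 : (0 : ℝ) < m := by exact_mod_cast hm
  have : Nonempty (Fin k) := ⟨⟨0, by omega⟩⟩
  have hLpos : 0 < √(2 * Real.log k) :=
    Real.sqrt_pos.2 (mul_pos two_pos (Real.log_pos hk1))
  set c : Fin m → ℝ := fun j => (1 / k : ℝ) * ∑ l, a l j with hc
  set b : Fin k → Fin m → ℝ := fun i j => a i j - c j with hbdef
  change _ ≤ (⨆ i : Fin k, √(∑ j, b i j ^ 2)) * _ / _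
  set D₀ := ⨆ i : Fin k, √(∑ j, b i j ^ 2) with hD₀
  have hle : ∀ i, √(∑ j, b i j ^ 2) ≤ D₀ := fun i =>
    le_ciSup (f := fun i => √(∑ j, b i j ^ 2)) (Set.finite_range _).bddAbove i
  have hD₀nn : 0 ≤ D₀ := (Real.sqrt_nonneg _).trans (hle (Classical.arbitrary _))
  set S : (Fin m → Bool) → ℝ :=
    fun σ => sSup ((fun a => ∑ i, signv (σ i) * a i) '' Set.range a) with hS
  have hM : ∀ σ, ∃ i, S σ - ∑ j, signv (σ j) * c j = ∑ j, signv (σ j) * b i j := by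
    intro σ
    have hmem : S σ ∈ (fun a => ∑ i, signv (σ i) * a i) '' Set.range a :=
      ((Set.range_nonempty a).image _).csSup_mem ((Set.finite_range a).image _)
    obtain ⟨_, ⟨i, rfl⟩, hi⟩ := hmem
    refine ⟨i, ?_⟩
    rw [← hi, ← Finset.sum_sub_distrib]
    exact Finset.sum_congr rfl fun j _ => by simp only [hbdef]; ring
  have key : ∀ D, D₀ < D → ∑ σ, S σ ≤ 2 ^ m * (D * √(2 * Real.log k)) := by
    intro D hD
    have h := sum_max_le hk b _ hM D (hD₀nn.trans_lt hD)
      fun i => (Real.sqrt_le_left (hD₀nn.trans hD.le)).1 ((hle i).trans hD.le)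
    rwa [Finset.sum_sub_distrib, sum_sign_eq_zero, sub_zero] at h
  have key0 : (∑ σ, S σ) / (2 ^ m * √(2 * Real.log k)) ≤ D₀ := by
    refine le_of_forall_gt_imp_ge_of_dense fun D hD => ?_
    rw [div_le_iff₀ (by positivity)]
    linarith [key D hD]
  rw [div_le_iff₀ (by positivity)] at key0
  change (1 / m : ℝ) * (1 / 2 ^ m) * ∑ σ, S σ ≤ _
  rw [le_div_iff₀ hm0]
  have h2 : (0 : ℝ) < 2 ^ m := by positivity
  calc (1 / m : ℝ) * (1 / 2 ^ m) * (∑ σ, S σ) * m = (∑ σ, S σ) / 2 ^ m := by field_simp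
    _ ≤ D₀ * √(2 * Real.log k) := by
      rw [div_le_iff₀ h2]
      linarith
end
end

section
/- Let m, n, N be positive integers, let V ∈ ℝ^{n×n} be a nonzero symmetric positive semidefinite matrix, and let X_1, …, X_N ∈ ℝ^{m×n}. Define H_max∘S = {(B_V(W, X_1), …, B_V(W, X_N)) : W ∈ ℝ^{m×n}, ‖W‖_max ≤ 1} ⊆ ℝ^N. Then R(H_max∘S) ≤ n · (max_{1≤i≤N} ‖X_i‖_1) · √(2(m·ln 2 + ln n)/N). -/
/-!
Write `M_σ = ∑ᵢ σᵢ Xᵢ`. By linearity `∑ᵢ σᵢ B_V(W, Xᵢ) = B_V(W, M_σ)`. If all entries of `W` are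
at most `1` in absolute value, every entry of `Wᵀ M_σ` is at most `‖M_σ‖₁`, so
`‖Wᵀ M_σ‖_F ≤ n ‖M_σ‖₁` and Cauchy–Schwarz gives `B_V(W, M_σ) ≤ n ‖M_σ‖₁` (`BV_le`).

The norm `‖M_σ‖₁` is the maximum over the `n · 2^m` pairs (column `b`, sign pattern `s`) of the
Rademacher sums `∑ᵢ σᵢ (∑ₖ sₖ (Xᵢ)ₖᵦ)`, whose coefficients are bounded by `max ‖Xᵢ‖₁`.
Massart's finite class lemma (`massart`) bounds the mean of this maximum.
-/

open Matrix

noncomputable section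

/-- Maximum absolute column sum `‖X‖_1`. -/
def norm1 {m n : ℕ} (X : Matrix (Fin m) (Fin n) ℝ) : ℝ :=
  ⨆ j : Fin n, ∑ i, |X i j|

/-- Maximum absolute entry `‖X‖_max`. -/
def normMax {m n : ℕ} (X : Matrix (Fin m) (Fin n) ℝ) : ℝ :=
  ⨆ i : Fin m, ⨆ j : Fin n, |X i j|

/-- The exponential moment of a Rademacher sum with coefficients bounded by `C`. -/
lemma sum_exp_le {N : ℕ} (c : Fin N → ℝ) (C l : ℝ) (hc : ∀ i, |c i| ≤ C) :
    ∑ σ : Fin N → Bool, Real.exp (l * ∑ i, signv (σ i) * c i) ≤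
      2 ^ N * Real.exp (N * (l ^ 2 * C ^ 2 / 2)) := by
  have h1 : ∀ σ : Fin N → Bool, Real.exp (l * ∑ i, signv (σ i) * c i) =
      ∏ i, Real.exp (l * (signv (σ i) * c i)) := by
    intro σ
    rw [Finset.mul_sum, Real.exp_sum]
  simp_rw [h1]
  have h2 := Finset.prod_univ_sum (fun _ : Fin N => (Finset.univ : Finset Bool))
    (fun i b => Real.exp (l * (signv b * c i)))
  rw [Fintype.piFinset_univ] at h2
  rw [← h2]
  calc ∏ i, ∑ b : Bool, Real.exp (l * (signv b * c i))
      ≤ ∏ _i : Fin N, 2 * Real.exp (l ^ 2 * C ^ 2 / 2) := by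
        apply Finset.prod_le_prod
        · intro i _
          positivity
        · intro i _
          have h3 : ∑ b : Bool, Real.exp (l * (signv b * c i)) = 2 * Real.cosh (l * c i) := by
            rw [Fintype.sum_bool, Real.cosh_eq]
            simp only [signv, if_true, Bool.false_eq_true, if_false]
            ring_nf
          rw [h3]
          have h4 : c i ^ 2 ≤ C ^ 2 := sq_le_sq' (abs_le.1 (hc i)).1 (abs_le.1 (hc i)).2
          have h5 := Real.cosh_le_exp_half_sq (l * c i)
          have h6 : Real.exp ((l * c i) ^ 2 / 2) ≤ Real.exp (l ^ 2 * C ^ 2 / 2) := by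
            apply Real.exp_le_exp.2
            rw [mul_pow]
            gcongr
          linarith
    _ = 2 ^ N * Real.exp (N * (l ^ 2 * C ^ 2 / 2)) := by
        rw [Finset.prod_const, Finset.card_univ, Fintype.card_fin, mul_pow, ← Real.exp_nat_mul]

/-- Massart's bound with a free parameter `l`, before optimisation. -/
lemma massart_param {N : ℕ} {ι : Type*} [Fintype ι] (hK : 0 < Fintype.card ι)
    (c : ι → Fin N → ℝ) (C l : ℝ) (hl : 0 < l) (hc : ∀ p i, |c p i| ≤ C)
    (Z : (Fin N → Bool) → ℝ) (hZ : ∀ σ, ∃ p, Z σ ≤ ∑ i, signv (σ i) * c p i) :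
    l * ∑ σ, Z σ ≤ 2 ^ N * (Real.log (Fintype.card ι) + N * (l ^ 2 * C ^ 2 / 2)) := by
  obtain ⟨L, hL⟩ : ∃ L, L = Real.log (Fintype.card ι) + N * (l ^ 2 * C ^ 2 / 2) := ⟨_, rfl⟩
  rw [← hL]
  have hK' : (0 : ℝ) < Fintype.card ι := by exact_mod_cast hK
  have hexpL : Real.exp L = Fintype.card ι * Real.exp (N * (l ^ 2 * C ^ 2 / 2)) := by
    rw [hL, Real.exp_add, Real.exp_log hK']
  have hsum : ∑ σ, Real.exp (l * Z σ) ≤ 2 ^ N * Real.exp L := by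
    calc ∑ σ, Real.exp (l * Z σ)
        ≤ ∑ σ : Fin N → Bool, ∑ p, Real.exp (l * ∑ i, signv (σ i) * c p i) := by
          apply Finset.sum_le_sum
          intro σ _
          obtain ⟨p, hp⟩ := hZ σ
          refine le_trans (Real.exp_le_exp.2 (mul_le_mul_of_nonneg_left hp hl.le)) ?_
          have hnn : ∀ q ∈ (Finset.univ : Finset ι),
              0 ≤ Real.exp (l * ∑ i, signv (σ i) * c q i) := fun q _ => (Real.exp_pos _).le
          exact Finset.single_le_sum hnn (Finset.mem_univ p)
      _ = ∑ p, ∑ σ : Fin N → Bool, Real.exp (l * ∑ i, signv (σ i) * c p i) := by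
          rw [Finset.sum_comm]
      _ ≤ ∑ _p : ι, 2 ^ N * Real.exp (N * (l ^ 2 * C ^ 2 / 2)) :=
          Finset.sum_le_sum fun p _ => sum_exp_le (c p) C l (hc p)
      _ = 2 ^ N * Real.exp L := by
          rw [Finset.sum_const, Finset.card_univ, nsmul_eq_mul, hexpL]
          ring
  -- Jensen's inequality in tangent-line form: `l Z ≤ L - 1 + exp (l Z) / exp L`.
  have hpt : ∀ σ, l * Z σ ≤ L - 1 + Real.exp (l * Z σ) / Real.exp L := by
    intro σ
    have := Real.add_one_le_exp (l * Z σ - L)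
    rw [Real.exp_sub] at this
    linarith
  have hcard : (Fintype.card (Fin N → Bool) : ℝ) = 2 ^ N := by simp
  calc l * ∑ σ, Z σ = ∑ σ, l * Z σ := Finset.mul_sum _ _ _
    _ ≤ ∑ σ, (L - 1 + Real.exp (l * Z σ) / Real.exp L) := Finset.sum_le_sum fun σ _ => hpt σ
    _ = 2 ^ N * (L - 1) + (∑ σ, Real.exp (l * Z σ)) / Real.exp L := by
        rw [Finset.sum_add_distrib, Finset.sum_const, Finset.card_univ, nsmul_eq_mul, hcard,
          Finset.sum_div]
    _ ≤ 2 ^ N * (L - 1) + 2 ^ N := by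
        gcongr
        exact (div_le_iff₀ (Real.exp_pos L)).2 hsum
    _ = 2 ^ N * L := by ring

/-- Massart's finite class lemma: `Z` stands for any function of the signs that is dominated by
the maximum of the Rademacher sums with coefficient vectors `c p`. -/
lemma massart {N : ℕ} (hN : 0 < N) {ι : Type*} [Fintype ι] (hK : 1 < Fintype.card ι)
    (c : ι → Fin N → ℝ) (C : ℝ) (hC : 0 ≤ C) (hc : ∀ p i, |c p i| ≤ C)
    (Z : (Fin N → Bool) → ℝ) (hZ : ∀ σ, ∃ p, Z σ ≤ ∑ i, signv (σ i) * c p i) :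
    (1 / N : ℝ) * (1 / 2 ^ N) * ∑ σ, Z σ ≤
      C * Real.sqrt (2 * Real.log (Fintype.card ι) / N) := by
  have hN' : (0 : ℝ) < N := by exact_mod_cast hN
  rcases hC.eq_or_lt with h0 | hpos
  · subst h0
    have hz : ∑ σ, Z σ ≤ 0 := by
      apply Finset.sum_nonpos
      intro σ _
      obtain ⟨p, hp⟩ := hZ σ
      have hcz : ∀ i, c p i = 0 := fun i => abs_nonpos_iff.1 (hc p i)
      simpa [hcz] using hp
    rw [zero_mul]
    exact mul_nonpos_of_nonneg_of_nonpos (by positivity) hz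
  · have hlog : 0 < Real.log (Fintype.card ι) := Real.log_pos (by exact_mod_cast hK)
    set s := Real.sqrt (2 * Real.log (Fintype.card ι) / N) with hs
    have hspos : 0 < s := Real.sqrt_pos.2 (by positivity)
    have hs2 : N * s ^ 2 = 2 * Real.log (Fintype.card ι) := by
      rw [hs, Real.sq_sqrt (by positivity)]
      field_simp
    -- `l = s / C` equates the two terms `log K` and `N l² C² / 2`.
    have h := massart_param (by omega) c C (s / C) (by positivity) hc Z hZ
    have e : Real.log (Fintype.card ι) + N * ((s / C) ^ 2 * C ^ 2 / 2) = N * s ^ 2 := by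
      rw [show (s / C) ^ 2 * C ^ 2 = s ^ 2 by field_simp]
      linarith
    rw [e] at h
    have h' : ∑ σ, Z σ ≤ 2 ^ N * (N * s * C) := by
      have h2 : s * ∑ σ, Z σ ≤ s * (2 ^ N * (N * s * C)) := by
        have h3 := mul_le_mul_of_nonneg_left h hpos.le
        have e1 : C * (s / C * ∑ σ, Z σ) = s * ∑ σ, Z σ := by field_simp
        rw [e1] at h3
        linarith
      exact le_of_mul_le_mul_left h2 hspos
    calc (1 / N : ℝ) * (1 / 2 ^ N) * ∑ σ, Z σ
        ≤ (1 / N : ℝ) * (1 / 2 ^ N) * (2 ^ N * (N * s * C)) := by gcongr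
      _ = C * s := by field_simp

lemma colsum_le_norm1 {m n : ℕ} (X : Matrix (Fin m) (Fin n) ℝ) (j : Fin n) :
    ∑ i, |X i j| ≤ norm1 X :=
  le_ciSup (f := fun j => ∑ i, |X i j|) (Set.finite_range _).bddAbove j

lemma norm1_nonneg {m n : ℕ} (X : Matrix (Fin m) (Fin n) ℝ) : 0 ≤ norm1 X :=
  Real.iSup_nonneg fun _ => Finset.sum_nonneg fun _ _ => abs_nonneg _

lemma abs_le_normMax {m n : ℕ} (W : Matrix (Fin m) (Fin n) ℝ) (i : Fin m) (j : Fin n) :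
    |W i j| ≤ normMax W :=
  (le_ciSup (f := fun j => |W i j|) (Set.finite_range _).bddAbove j).trans
    (le_ciSup (f := fun i => ⨆ j, |W i j|) (Set.finite_range _).bddAbove i)

lemma frobInner_le {m n : ℕ} (A B : Matrix (Fin m) (Fin n) ℝ) :
    frobInner A B ≤ frobNorm A * frobNorm B := by
  have h := Real.sum_mul_le_sqrt_mul_sqrt (Finset.univ : Finset (Fin m × Fin n))
    (fun p => A p.1 p.2) (fun p => B p.1 p.2)
  simpa only [frobNorm, frobInner, Fintype.sum_prod_type, ← pow_two] using h

lemma BV_le {m n : ℕ} (V : Matrix (Fin n) (Fin n) ℝ) (W M : Matrix (Fin m) (Fin n) ℝ)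
    (hW : normMax W ≤ 1) : BV V W M ≤ n * norm1 M := by
  have hentry : ∀ a b, |(Wᵀ * M) a b| ≤ norm1 M := by
    intro a b
    rw [Matrix.mul_apply]
    refine (Finset.abs_sum_le_sum_abs _ _).trans (le_trans ?_ (colsum_le_norm1 M b))
    apply Finset.sum_le_sum
    intro k _
    rw [abs_mul, Matrix.transpose_apply]
    exact mul_le_of_le_one_left (abs_nonneg _) ((abs_le_normMax W k a).trans hW)
  have hn0 : 0 ≤ n * norm1 M := mul_nonneg (Nat.cast_nonneg _) (norm1_nonneg M)
  have hfrob : frobNorm (Wᵀ * M) ≤ n * norm1 M := by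
    apply Real.sqrt_le_iff.2 ⟨hn0, ?_⟩
    calc frobInner (Wᵀ * M) (Wᵀ * M) ≤ ∑ _a : Fin n, ∑ _b : Fin n, norm1 M ^ 2 := by
          apply Finset.sum_le_sum
          intro a _
          apply Finset.sum_le_sum
          intro b _
          rw [← pow_two]
          exact sq_le_sq' (abs_le.1 (hentry a b)).1 (abs_le.1 (hentry a b)).2
      _ = (n * norm1 M) ^ 2 := by
          simp only [Finset.sum_const, Finset.card_univ, Fintype.card_fin, nsmul_eq_mul]
          ring
  have hV : 0 ≤ frobNorm V := Real.sqrt_nonneg _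
  unfold BV
  refine div_le_of_le_mul₀ hV hn0 ?_
  exact (frobInner_le _ _).trans (mul_le_mul_of_nonneg_right hfrob hV)

lemma BV_sum {m n N : ℕ} (V : Matrix (Fin n) (Fin n) ℝ) (W : Matrix (Fin m) (Fin n) ℝ)
    (X : Fin N → Matrix (Fin m) (Fin n) ℝ) (t : Fin N → ℝ) :
    ∑ i, t i * BV V W (X i) = BV V W (∑ i, t i • X i) := by
  have h : frobInner (Wᵀ * ∑ i, t i • X i) V = ∑ i, t i * frobInner (Wᵀ * X i) V := by
    simp only [frobInner, Matrix.mul_sum, Matrix.mul_smul, Matrix.sum_apply, Matrix.smul_apply,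
      smul_eq_mul, Finset.sum_mul, Finset.mul_sum]
    rw [Finset.sum_comm_cycle]
    refine Finset.sum_congr rfl fun i _ => Finset.sum_congr rfl fun a _ =>
      Finset.sum_congr rfl fun b _ => by ring
  simp only [BV, h, Finset.sum_div, mul_div_assoc]

/-- `‖∑ tᵢ Xᵢ‖₁` is attained at some column `b` and some sign pattern `s`. -/
lemma norm1_attained {m n N : ℕ} (hn : 0 < n) (X : Fin N → Matrix (Fin m) (Fin n) ℝ)
    (t : Fin N → ℝ) : ∃ p : Fin n × (Fin m → Bool),
      norm1 (∑ i, t i • X i) ≤ ∑ i, t i * ∑ k, signv (p.2 k) * X i k p.1 := by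
  have : Nonempty (Fin n) := ⟨⟨0, hn⟩⟩
  set M := ∑ i, t i • X i with hM
  obtain ⟨b, hb⟩ := exists_eq_ciSup_of_finite (f := fun j => ∑ k, |M k j|)
  refine ⟨(b, fun k => decide (0 ≤ M k b)), ?_⟩
  have h1 : norm1 M = ∑ k, |M k b| := hb.symm
  rw [h1]
  apply le_of_eq
  have h2 : ∀ k, |M k b| = signv (decide (0 ≤ M k b)) * M k b := by
    intro k
    by_cases h : 0 ≤ M k b
    · simp [signv, h, abs_of_nonneg h]
    · simp [signv, h, abs_of_neg (not_le.1 h)]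
  have h3 : ∀ k, M k b = ∑ i, t i * X i k b := by
    intro k
    simp [hM, Matrix.sum_apply]
  calc ∑ k, |M k b| = ∑ k, signv (decide (0 ≤ M k b)) * ∑ i, t i * X i k b :=
        Finset.sum_congr rfl fun k _ => by rw [h2 k, ← h3 k]
    _ = ∑ i, t i * ∑ k, signv (decide (0 ≤ M k b)) * X i k b := by
        simp only [Finset.mul_sum]
        rw [Finset.sum_comm]
        exact Finset.sum_congr rfl fun i _ => Finset.sum_congr rfl fun k _ => by ring

/-- Rademacher complexity bound for the max-norm-constrained KSMM hypothesis class: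
    `R(H_max∘S) ≤ n · max_i ‖X_i‖_1 · √(2(m ln 2 + ln n)/N)`. -/
theorem stmt_9 {m n N : ℕ} (hm : 0 < m) (hn : 0 < n) (hN : 0 < N)
    (V : Matrix (Fin n) (Fin n) ℝ) (hV : V.PosSemidef) (hV0 : V ≠ 0)
    (X : Fin N → Matrix (Fin m) (Fin n) ℝ) :
    rademacher {v : Fin N → ℝ |
        ∃ W : Matrix (Fin m) (Fin n) ℝ, normMax W ≤ 1 ∧ v = fun i => BV V W (X i)} ≤
      n * (⨆ i, norm1 (X i)) *
        Real.sqrt (2 * (m * Real.log 2 + Real.log n) / N) := by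
  set C := ⨆ i, norm1 (X i) with hC
  have hC0 : 0 ≤ C := Real.iSup_nonneg fun i => norm1_nonneg _
  have hCi : ∀ i, norm1 (X i) ≤ C := fun i =>
    le_ciSup (f := fun i => norm1 (X i)) (Set.finite_range _).bddAbove i
  have hcard : Fintype.card (Fin n × (Fin m → Bool)) = n * 2 ^ m := by simp
  have hlog : Real.log (Fintype.card (Fin n × (Fin m → Bool))) =
      m * Real.log 2 + Real.log n := by
    rw [hcard]
    push_cast
    rw [Real.log_mul (by positivity) (by positivity), Real.log_pow]
    ring
  have hK : 1 < Fintype.card (Fin n × (Fin m → Bool)) := by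
    rw [hcard]
    exact lt_of_lt_of_le (Nat.one_lt_two_pow hm.ne') (Nat.le_mul_of_pos_left _ hn)
  have hmass := massart hN hK (fun p i => ∑ k, signv (p.2 k) * X i k p.1) C hC0
    (by
      intro p i
      refine (Finset.abs_sum_le_sum_abs _ _).trans ?_
      simp only [abs_mul, abs_signv, one_mul]
      exact (colsum_le_norm1 (X i) p.1).trans (hCi i))
    (fun σ => norm1 (∑ i, signv (σ i) • X i))
    (fun σ => norm1_attained hn X fun i => signv (σ i))
  rw [hlog] at hmass
  have hsup : ∀ σ : Fin N → Bool, sSup ((fun a => ∑ i, signv (σ i) * a i) ''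
      {v : Fin N → ℝ | ∃ W : Matrix (Fin m) (Fin n) ℝ, normMax W ≤ 1 ∧
        v = fun i => BV V W (X i)}) ≤ n * norm1 (∑ i, signv (σ i) • X i) := by
    intro σ
    apply Real.sSup_le
    · rintro _ ⟨_, ⟨W, hW, rfl⟩, rfl⟩
      have h := BV_sum V W X fun i => signv (σ i)
      exact h.le.trans (BV_le V W _ hW)
    · exact mul_nonneg (Nat.cast_nonneg _) (norm1_nonneg _)
  unfold rademacher
  calc _ ≤ (1 / N : ℝ) * (1 / 2 ^ N) *
        ∑ σ : Fin N → Bool, n * norm1 (∑ i, signv (σ i) • X i) :=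
        mul_le_mul_of_nonneg_left (Finset.sum_le_sum fun σ _ => hsup σ) (by positivity)
    _ = n * ((1 / N : ℝ) * (1 / 2 ^ N) *
        ∑ σ : Fin N → Bool, norm1 (∑ i, signv (σ i) • X i)) := by
        rw [← Finset.mul_sum]
        ring
    _ ≤ n * (C * Real.sqrt (2 * (m * Real.log 2 + Real.log n) / N)) :=
        mul_le_mul_of_nonneg_left hmass (Nat.cast_nonneg _)
    _ = _ := by ring
end
end

section
/- For all A, W ∈ ℝ^{m×n}, ⟨AᵀW, AᵀW + WᵀA⟩_F · ⟨WᵀW, WᵀW⟩_F ≥ 2 · (⟨AᵀW, WᵀW⟩_F)². -/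
/-! With `M = AᵀW`, the matrices `M + Mᵀ` and `WᵀW` are symmetric, so pairing `M + Mᵀ` with
either of them is twice pairing `M` with it (`frobInner_add_transpose`). The inequality is then
half of Cauchy–Schwarz (`frobInner_sq_le`) for `M + Mᵀ` and `WᵀW`. -/

open Matrix

noncomputable section

/-- Symmetrizing the left argument doubles the pairing with a symmetric matrix. -/
lemma frobInner_add_transpose {n : ℕ} (M S : Matrix (Fin n) (Fin n) ℝ) (hS : Sᵀ = S) :
    frobInner (M + Mᵀ) S = 2 * frobInner M S := by
  have h : frobInner Mᵀ S = frobInner M S := by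
    unfold frobInner
    rw [Finset.sum_comm]
    refine Finset.sum_congr rfl fun i _ => Finset.sum_congr rfl fun j _ => ?_
    rw [← congrFun (congrFun hS i) j]
    rfl
  have hadd : frobInner (M + Mᵀ) S = frobInner M S + frobInner Mᵀ S := by
    simp only [frobInner, Matrix.add_apply, add_mul, Finset.sum_add_distrib]
  rw [hadd, h, two_mul]

/-- Cauchy–Schwarz for the Frobenius inner product. -/
lemma frobInner_sq_le {m n : ℕ} (A B : Matrix (Fin m) (Fin n) ℝ) :
    frobInner A B ^ 2 ≤ frobInner A A * frobInner B B := by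
  have h := Finset.sum_mul_sq_le_sq_mul_sq (Finset.univ : Finset (Fin m × Fin n))
    (fun p => A p.1 p.2) (fun p => B p.1 p.2)
  simpa only [frobInner, Fintype.sum_prod_type, sq (A _ _), sq (B _ _)] using h

/-- For all `A, W ∈ ℝ^{m×n}`,
    `⟨AᵀW, AᵀW + WᵀA⟩_F · ⟨WᵀW, WᵀW⟩_F ≥ 2 · (⟨AᵀW, WᵀW⟩_F)²`. -/
theorem stmt_11 {m n : ℕ} (A W : Matrix (Fin m) (Fin n) ℝ) :
    frobInner (Aᵀ * W) (Aᵀ * W + Wᵀ * A) * frobInner (Wᵀ * W) (Wᵀ * W) ≥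
      2 * frobInner (Aᵀ * W) (Wᵀ * W) ^ 2 := by
  have hT : Wᵀ * A = (Aᵀ * W)ᵀ := by simp
  rw [hT]
  set M := Aᵀ * W
  have h₁ := frobInner_add_transpose M (M + Mᵀ) (by simp [add_comm])
  have h₂ := frobInner_add_transpose M (Wᵀ * W) (by simp)
  have h := frobInner_sq_le (M + Mᵀ) (Wᵀ * W)
  rw [h₁, h₂] at h
  nlinarith [h]
end
end
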